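/- arXiv:0810.4824 — 9 statements merged into one kernel-verified Lean document; each statement's English description precedes it below -/
import Mathlib

section
/- Let q ∈ ℝ, m, ε₀, μ₀, c > 0 with c² ε₀ μ₀ = 1. Let f ∈ C¹(ℝ × ℝ³ × ℝ³; ℝ) and E, B ∈ C¹(ℝ × ℝ³; ℝ³) satisfy, pointwise: the Vlasov equation ∂_t f + v·∇_x f + (q/m)(E + v × B)·∇_v f = 0; Ampère's law ∂_t E − c² ∇ × B = −J/ε₀ with J(t,x) = q ∫_{ℝ³} f(t,x,v) v dv; and Faraday's law ∂_t B + ∇ × E = 0. Assume that for every compact time interval I there are compact sets K₁ ⊂ ℝ³ × ℝ³ and K₂ ⊂ ℝ³ such that f(t,·,·) is supported in K₁ and E(t,·), B(t,·) are supported in K₂ for all t ∈ I. Then the total energy t ↦ (1/2) ∫_{ℝ³} ( ε₀ ‖E(t,x)‖² + ‖B(t,x)‖²/μ₀ + ∫_{ℝ³} m ‖v‖² f(t,x,v) dv ) dx is constant in time. -/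
/-!
The total energy is `∫ w dx + ∫∫ k dx dv` with `w = ε₀ |E|² + |B|² / μ₀` and `k = m |v|² f` (up to
the factor `1/2`, and by Fubini). Both integrals may be differentiated under the integral sign,
because the supports are compact locally uniformly in time (`hasDerivAt_integral_of_compact`).

The two time derivatives cancel. By Ampère's and Faraday's laws and `c² ε₀ μ₀ = 1`, `∂ₜ w` equals
`(2 / μ₀) (E · curl B - B · curl E) - 2 E · J`, whose first part is a divergence and integrates to
zero (`nullInt_poynting`). By the Vlasov equation, `∂ₜ k` equals `2 q (E · v) f` up to derivatives
in `x` and `v` of compactly supported functions (`nullInt_kinetic`); here the magnetic force drops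
out because `v · (v × B) = 0` and because the Lorentz force is divergence free in `v`. Finally
`∫∫ q (E · v) f dv dx = ∫ E · J dx` by Fubini.

All the integrations by parts are instances of one fact: a directional derivative of a compactly
supported `C¹` function has integral zero (`nullInt_of_hasLineDerivAt`).
-/

open MeasureTheory
open scoped BigOperators

noncomputable section

/-- ℝ³ as functions `Fin 3 → ℝ`. -/
abbrev V3 := Fin 3 → ℝ

/-- Squared Euclidean norm on ℝ³. -/
def nsq (v : V3) : ℝ := ∑ s, v s ^ 2

/-- Partial derivative in time of `f(t,x,v)`. -/
def ptt (f : ℝ → V3 → V3 → ℝ) (t : ℝ) (x v : V3) : ℝ := deriv (fun s => f s x v) t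

/-- Partial derivative of `f(t,x,v)` in the space direction `s`. -/
def pxx (f : ℝ → V3 → V3 → ℝ) (t : ℝ) (x v : V3) (s : Fin 3) : ℝ :=
  fderiv ℝ (fun y => f t y v) x (Pi.single s 1)

/-- Partial derivative of `f(t,x,v)` in the velocity direction `s`. -/
def pvv (f : ℝ → V3 → V3 → ℝ) (t : ℝ) (x v : V3) (s : Fin 3) : ℝ :=
  fderiv ℝ (fun w => f t x w) v (Pi.single s 1)

/-- Cross product on ℝ³. -/
def cross3 (a b : V3) : V3 :=
  ![a 1 * b 2 - a 2 * b 1, a 2 * b 0 - a 0 * b 2, a 0 * b 1 - a 1 * b 0]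

/-- Partial derivative `∂_i F_j` of a vector field on ℝ³. -/
def pdF (F : V3 → V3) (x : V3) (i j : Fin 3) : ℝ :=
  fderiv ℝ (fun y => F y j) x (Pi.single i 1)

/-- Curl of a vector field on ℝ³. -/
def curl3 (F : V3 → V3) (x : V3) : V3 :=
  ![pdF F x 1 2 - pdF F x 2 1, pdF F x 2 0 - pdF F x 0 2, pdF F x 0 1 - pdF F x 1 0]

/-- `d` is integrable with vanishing integral. -/
def NullInt {X : Type*} [MeasurableSpace X] (μ : Measure X) (d : X → ℝ) : Prop :=
  Integrable d μ ∧ ∫ x, d x ∂μ = 0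

lemma NullInt.add {X : Type*} [MeasurableSpace X] {μ : Measure X} {d e : X → ℝ}
    (hd : NullInt μ d) (he : NullInt μ e) : NullInt μ (fun x => d x + e x) :=
  ⟨hd.1.add he.1, by rw [integral_add hd.1 he.1, hd.2, he.2, add_zero]⟩

lemma NullInt.const_mul {X : Type*} [MeasurableSpace X] {μ : Measure X} {d : X → ℝ}
    (hd : NullInt μ d) (a : ℝ) : NullInt μ (fun x => a * d x) :=
  ⟨hd.1.const_mul a, by rw [integral_const_mul, hd.2, mul_zero]⟩

lemma NullInt.sum {X ι : Type*} [MeasurableSpace X] {μ : Measure X} (s : Finset ι)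
    {d : ι → X → ℝ} (hd : ∀ i, NullInt μ (d i)) : NullInt μ (fun x => ∑ i ∈ s, d i x) :=
  ⟨integrable_finsetSum _ fun i _ => (hd i).1, by
    rw [integral_finsetSum _ fun i _ => (hd i).1]
    exact Finset.sum_eq_zero fun i _ => (hd i).2⟩

/-- The directional derivative of a compactly supported `C¹` function has integral zero:
integration by parts against the constant function `1`. -/
lemma nullInt_of_hasLineDerivAt {W : Type*} [NormedAddCommGroup W] [NormedSpace ℝ W]
    [FiniteDimensional ℝ W] [MeasurableSpace W] [BorelSpace W] (μ : Measure W)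
    [μ.IsAddHaarMeasure] {h d : W → ℝ} (w : W) (hh : ContDiff ℝ 1 h) (hs : HasCompactSupport h)
    (hd : ∀ x, HasLineDerivAt ℝ h (d x) x w) : NullInt μ d := by
  have hdiff : Differentiable ℝ h := hh.differentiable (by norm_num)
  have hd' : d = fun x => fderiv ℝ h x w := by
    funext x
    exact (hd x).lineDeriv.symm.trans (hdiff x).lineDeriv_eq_fderiv
  have hc : Continuous (fun x => fderiv ℝ h x w) :=
    (hh.continuous_fderiv (by norm_num)).clm_apply continuous_const
  have hi : Integrable (fun x => fderiv ℝ h x w) μ :=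
    hc.integrable_of_hasCompactSupport (hs.fderiv_apply ℝ w)
  rw [hd']
  refine ⟨hi, ?_⟩
  have := integral_mul_fderiv_eq_neg_fderiv_mul_of_integrable (μ := μ) (f := fun _ : W => (1:ℝ))
    (g := h) (v := w) (by simp) (by simpa using hi)
    (by simpa using hh.continuous.integrable_of_hasCompactSupport hs)
    (fun _ _ => differentiableAt_const _) fun x _ => hdiff x
  simpa using this

/-- Differentiation under the integral sign for a `C¹` family of functions whose supports lie,
locally uniformly in time, in a compact set. -/
lemma hasDerivAt_integral_of_compact {X : Type*} [NormedAddCommGroup X] [NormedSpace ℝ X]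
    [FiniteDimensional ℝ X] [MeasurableSpace X] [BorelSpace X] (μ : Measure X)
    [IsFiniteMeasureOnCompacts μ] {g : ℝ → X → ℝ}
    (hg : ContDiff ℝ 1 fun p : ℝ × X => g p.1 p.2)
    (hs : ∀ I : Set ℝ, IsCompact I → ∃ K : Set X, IsCompact K ∧ ∀ t ∈ I, ∀ x ∉ K, g t x = 0)
    (t : ℝ) :
    Integrable (fun x => deriv (fun s => g s x) t) μ ∧
      HasDerivAt (fun s => ∫ x, g s x ∂μ) (∫ x, deriv (fun s => g s x) t ∂μ) t := by
  have : ProperSpace X := FiniteDimensional.proper ℝ X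
  have hd : ∀ t x, HasDerivAt (fun s => g s x) (fderiv ℝ (fun p : ℝ × X => g p.1 p.2) (t, x) (1, 0))
      t := fun t x => by
    have h1 := (hg.differentiable (by norm_num) (t, x)).hasFDerivAt
    have h2 : HasDerivAt (fun s : ℝ => (s, x)) ((1 : ℝ), (0 : X)) t :=
      (hasDerivAt_id t).prodMk (hasDerivAt_const t x)
    exact h1.comp_hasDerivAt t h2
  have hg' : Continuous fun p : ℝ × X => deriv (fun s => g s p.2) p.1 := by
    have : (fun p : ℝ × X => deriv (fun s => g s p.2) p.1)
        = fun p => fderiv ℝ (fun p : ℝ × X => g p.1 p.2) p (1, 0) :=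
      funext fun p => (hd p.1 p.2).deriv
    rw [this]
    exact (hg.continuous_fderiv (by norm_num)).clm_apply continuous_const
  replace hd : ∀ t x, HasDerivAt (fun s => g s x) (deriv (fun s => g s x) t) t :=
    fun t x => (hd t x).differentiableAt.hasDerivAt
  obtain ⟨K, hK, hK0⟩ := hs (Metric.closedBall t 1) (isCompact_closedBall t 1)
  obtain ⟨C, hC⟩ := ((isCompact_closedBall t 1).prod hK).exists_bound_of_continuousOn
    hg'.continuousOn
  have hgt : ∀ s, Continuous (g s) := fun s =>
    hg.continuous.comp (by fun_prop : Continuous fun x => (s, x))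
  have hgt' : Continuous (fun x => deriv (fun s => g s x) t) :=
    hg'.comp (by fun_prop : Continuous fun x => (t, x))
  have hint : Integrable (g t) μ := (hgt t).integrable_of_hasCompactSupport
    (HasCompactSupport.intro hK (hK0 t (Metric.mem_closedBall_self zero_le_one)))
  refine hasDerivAt_integral_of_dominated_loc_of_deriv_le (s := Metric.ball t 1)
    (F' := fun t x => deriv (fun s => g s x) t)
    (bound := K.indicator fun _ => C) (Metric.ball_mem_nhds t one_pos)
    (Filter.Eventually.of_forall fun s => (hgt s).aestronglyMeasurable) hint
    hgt'.aestronglyMeasurable (Filter.Eventually.of_forall fun x s hsb => ?_)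
    ((integrable_indicator_iff hK.measurableSet).2
      (integrableOn_const hK.measure_lt_top.ne))
    (Filter.Eventually.of_forall fun x s _ => hd s x)
  by_cases hx : x ∈ K
  · simpa [hx] using hC (s, x) ⟨Metric.ball_subset_closedBall hsb, hx⟩
  · -- off `K` the function of time vanishes near `s`, hence so does its derivative
    have : (fun r => g r x) =ᶠ[nhds s] fun _ => 0 := by
      filter_upwards [Metric.isOpen_ball.mem_nhds hsb] with r hr
      exact hK0 r (Metric.ball_subset_closedBall hr) x hx
    simp [hx, this.deriv_eq]

instance isAddHaarMeasure_volume_V3_prod : (volume : Measure (V3 × V3)).IsAddHaarMeasure :=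
  Measure.prod.instIsAddHaarMeasure volume volume

/-- `HasCompactSupport.mul_left` with the product written pointwise, which unifies much faster. -/
lemma hasCompactSupport_mul_left {X : Type*} [TopologicalSpace X] (a : X → ℝ) {g : X → ℝ}
    (hg : HasCompactSupport g) : HasCompactSupport fun x => a x * g x :=
  hg.mul_left

lemma contDiff_nsq : ContDiff ℝ 1 nsq := by
  unfold nsq
  fun_prop

lemma hasDerivAt_nsq_line (v : V3) (s : Fin 3) :
    HasDerivAt (fun r : ℝ => nsq (v + r • Pi.single s 1)) (2 * v s) 0 := by
  have h : ∀ i, HasDerivAt (fun r : ℝ => (v + r • (Pi.single s 1 : V3)) i ^ 2)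
      (2 * v i * (Pi.single s 1 : V3) i) 0 := fun i => by
    have := (((hasDerivAt_id (0 : ℝ)).mul_const ((Pi.single s 1 : V3) i)).const_add (v i)).fun_pow 2
    simpa using this
  have := HasDerivAt.fun_sum (u := Finset.univ) fun i _ => h i
  simpa [nsq, Pi.single_apply] using this

/-- The `s`-component of `v × b` does not depend on `v s`, so the Lorentz force is
divergence free in velocity. -/
lemma cross3_add_smul_single (v b : V3) (s : Fin 3) (r : ℝ) :
    cross3 (v + r • Pi.single s 1) b s = cross3 v b s := by
  fin_cases s <;> simp [cross3]

/-- The magnetic force does no work: `v · (e + v × b) = v · e`. -/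
lemma sum_mul_lorentz (v e b : V3) :
    ∑ s, v s * (e s + cross3 v b s) = ∑ s, e s * v s := by
  simp [Fin.sum_univ_three, cross3]
  ring

lemma contDiff_cross3_apply {X : Type*} [NormedAddCommGroup X] [NormedSpace ℝ X] {a b : X → V3}
    (ha : ContDiff ℝ 1 a) (hb : ContDiff ℝ 1 b) (s : Fin 3) :
    ContDiff ℝ 1 fun x => cross3 (a x) (b x) s := by
  have ha' := contDiff_pi.1 ha
  have hb' := contDiff_pi.1 hb
  fin_cases s <;> simp only [cross3] <;> simp <;>
    exact ((ha' _).mul (hb' _)).sub ((ha' _).mul (hb' _))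

/-- The directional derivative of `h` along `w`, as a one-variable derivative. -/
lemma hasDerivAt_line {W : Type*} [NormedAddCommGroup W] [NormedSpace ℝ W] {h : W → ℝ}
    (hh : Differentiable ℝ h) (x w : W) :
    HasDerivAt (fun r : ℝ => h (x + r • w)) (fderiv ℝ h x w) 0 :=
  (hh x).hasFDerivAt.hasLineDerivAt w

/-- At a fixed time, with `p` in the role of `∂ₜ f`, the Vlasov equation says that the rate of change
of the kinetic energy density `m |v|² f` is `2 q (e · v) f` up to derivatives in `x` and `v` of
compactly supported functions. -/
lemma nullInt_kinetic (q m : ℝ) (hm : m ≠ 0) (f p : V3 → V3 → ℝ) (e b : V3 → V3)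
    (hf : ContDiff ℝ 1 fun z : V3 × V3 => f z.1 z.2) (he : ContDiff ℝ 1 e) (hb : ContDiff ℝ 1 b)
    (hs : HasCompactSupport fun z : V3 × V3 => f z.1 z.2)
    (hv : ∀ x v : V3, p x v + (∑ s, v s * fderiv ℝ (fun y => f y v) x (Pi.single s 1))
      + (q / m) * ∑ s, (e x s + cross3 v (b x) s) *
          fderiv ℝ (fun w => f x w) v (Pi.single s 1) = 0) :
    NullInt (volume : Measure (V3 × V3)) fun z =>
      m * nsq z.2 * p z.1 z.2 - 2 * q * ∑ s, e z.1 s * (f z.1 z.2 * z.2 s) := by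
  have hfx : ∀ v, Differentiable ℝ fun y => f y v := fun v =>
    (hf.comp (by fun_prop : ContDiff ℝ 1 fun y : V3 => (y, v))).differentiable (by norm_num)
  have hfv : ∀ x, Differentiable ℝ fun w => f x w := fun x =>
    (hf.comp (by fun_prop : ContDiff ℝ 1 fun w : V3 => (x, w))).differentiable (by norm_num)
  have hn : ContDiff ℝ 1 fun z : V3 × V3 => nsq z.2 := contDiff_nsq.comp contDiff_snd
  have hes : ∀ s, ContDiff ℝ 1 fun z : V3 × V3 => e z.1 s := fun s =>
    (contDiff_pi.1 he s).comp contDiff_fst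
  have hcs : ∀ s, ContDiff ℝ 1 fun z : V3 × V3 => cross3 z.2 (b z.1) s :=
    contDiff_cross3_apply contDiff_snd (hb.comp contDiff_fst)
  -- transport term: `∂_{x_s} (|v|² v_s f)`
  have h1 : ∀ s, NullInt (volume : Measure (V3 × V3)) fun z =>
      nsq z.2 * z.2 s * fderiv ℝ (fun y => f y z.2) z.1 (Pi.single s 1) := fun s => by
    have hc : ContDiff ℝ 1 fun z : V3 × V3 => nsq z.2 * z.2 s * f z.1 z.2 :=
      (hn.mul ((contDiff_apply ℝ ℝ s).comp contDiff_snd)).mul hf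
    refine nullInt_of_hasLineDerivAt volume (Pi.single s 1, 0) hc
      (hasCompactSupport_mul_left (fun z : V3 × V3 => nsq z.2 * z.2 s) hs) fun z => ?_
    have := (hasDerivAt_line (hfx z.2) z.1 (Pi.single s 1)).const_mul (nsq z.2 * z.2 s)
    simpa [HasLineDerivAt] using this
  -- force term: `∂_{v_s} (|v|² (e + v × b)_s f)`
  have h2 : ∀ s, NullInt (volume : Measure (V3 × V3)) fun z =>
      2 * z.2 s * (e z.1 s + cross3 z.2 (b z.1) s) * f z.1 z.2
      + nsq z.2 * (e z.1 s + cross3 z.2 (b z.1) s)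
        * fderiv ℝ (fun w => f z.1 w) z.2 (Pi.single s 1) := fun s => by
    have hc : ContDiff ℝ 1 fun z : V3 × V3 =>
        nsq z.2 * (e z.1 s + cross3 z.2 (b z.1) s) * f z.1 z.2 :=
      (hn.mul ((hes s).add (hcs s))).mul hf
    refine nullInt_of_hasLineDerivAt volume (0, Pi.single s 1) hc
      (hasCompactSupport_mul_left (fun z : V3 × V3 =>
        nsq z.2 * (e z.1 s + cross3 z.2 (b z.1) s)) hs) fun z => ?_
    have := ((hasDerivAt_nsq_line z.2 s).mul_const (e z.1 s + cross3 z.2 (b z.1) s)).mul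
      (hasDerivAt_line (hfv z.1) z.2 (Pi.single s 1))
    simpa [HasLineDerivAt, cross3_add_smul_single, Pi.mul_def] using this
  have h := ((NullInt.sum Finset.univ h1).const_mul (-m)).add
    ((NullInt.sum Finset.univ h2).const_mul (-q))
  convert h using 2 with z
  have h3 := hv z.1 z.2
  have h4 := sum_mul_lorentz z.2 (e z.1) (b z.1)
  have h5 : p z.1 z.2 = -(∑ s, z.2 s * fderiv ℝ (fun y => f y z.2) z.1 (Pi.single s 1))
      - (q / m) * ∑ s, (e z.1 s + cross3 z.2 (b z.1) s) *
          fderiv ℝ (fun w => f z.1 w) z.2 (Pi.single s 1) := by linarith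
  have h6 : ∑ s, e z.1 s * (f z.1 z.2 * z.2 s) = f z.1 z.2 * ∑ s, e z.1 s * z.2 s := by
    rw [Finset.mul_sum]; exact Finset.sum_congr rfl fun _ _ => by ring
  rw [h5, h6, ← h4]
  simp only [Fin.sum_univ_three]
  field_simp
  ring

/-- Poynting's theorem: `e · curl b - b · curl e = div (b × e)` has integral zero. -/
lemma nullInt_poynting (e b : V3 → V3) (he : ContDiff ℝ 1 e) (hb : ContDiff ℝ 1 b)
    (hs : HasCompactSupport e) :
    NullInt (volume : Measure V3) fun x =>
      (∑ i, e x i * curl3 b x i) - ∑ i, b x i * curl3 e x i := by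
  have he' := contDiff_pi.1 he
  have hb' := contDiff_pi.1 hb
  have key : ∀ i j k, NullInt (volume : Measure V3) fun x =>
      pdF e x i j * b x k + e x j * pdF b x i k := fun i j k => by
    have hsj : HasCompactSupport fun x => e x j :=
      hs.comp_left (g := fun y : V3 => y j) rfl
    refine nullInt_of_hasLineDerivAt volume (h := fun x => e x j * b x k)
      (Pi.single i 1) ((he' j).mul (hb' k)) hsj.mul_right fun x => ?_
    have := (hasDerivAt_line ((he' j).differentiable (by norm_num)) x (Pi.single i 1)).mul
      (hasDerivAt_line ((hb' k).differentiable (by norm_num)) x (Pi.single i 1))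
    simpa [HasLineDerivAt, pdF, Pi.mul_def] using this
  have h := ((((key 1 0 2).add ((key 2 0 1).const_mul (-1))).add (key 2 1 0)).add
    ((key 0 1 2).const_mul (-1))).add ((key 0 2 1).add ((key 1 2 0).const_mul (-1)))
  convert h using 2 with x
  simp [Fin.sum_univ_three, curl3]
  ring

/-- for a (locally in time) compactly supported `C¹` solution of the
Vlasov–Maxwell system, the total (kinetic + electromagnetic) energy is constant in time. -/
theorem vlasov_maxwell_total_energy_constant
    (q m ε₀ μ₀ c : ℝ) (hm : 0 < m) (hε₀ : 0 < ε₀) (hμ₀ : 0 < μ₀) (hc : 0 < c)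
    (hcεμ : c ^ 2 * ε₀ * μ₀ = 1)
    (f : ℝ → V3 → V3 → ℝ)
    (hf : ContDiff ℝ 1 fun p : ℝ × V3 × V3 => f p.1 p.2.1 p.2.2)
    (E B : ℝ → V3 → V3)
    (hE : ContDiff ℝ 1 fun p : ℝ × V3 => E p.1 p.2)
    (hB : ContDiff ℝ 1 fun p : ℝ × V3 => B p.1 p.2)
    (hvlasov : ∀ (t : ℝ) (x v : V3),
      ptt f t x v + (∑ s, v s * pxx f t x v s)
        + (q / m) * ∑ s, (E t x s + cross3 v (B t x) s) * pvv f t x v s = 0)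
    (hampere : ∀ (t : ℝ) (x : V3) (i : Fin 3),
      deriv (fun s => E s x i) t - c ^ 2 * curl3 (B t) x i
        = -(q * ∫ v : V3, f t x v * v i) / ε₀)
    (hfaraday : ∀ (t : ℝ) (x : V3) (i : Fin 3),
      deriv (fun s => B s x i) t + curl3 (E t) x i = 0)
    (hsuppf : ∀ I : Set ℝ, IsCompact I → ∃ K₁ : Set (V3 × V3), IsCompact K₁ ∧
      ∀ t ∈ I, ∀ (x v : V3), (x, v) ∉ K₁ → f t x v = 0)
    (hsuppEB : ∀ I : Set ℝ, IsCompact I → ∃ K₂ : Set V3, IsCompact K₂ ∧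
      ∀ t ∈ I, ∀ x ∉ K₂, E t x = 0 ∧ B t x = 0) :
    ∀ t₁ t₂ : ℝ,
      (1/2) * (∫ x : V3,
          (ε₀ * nsq (E t₁ x) + nsq (B t₁ x) / μ₀ + ∫ v : V3, m * nsq v * f t₁ x v))
      = (1/2) * (∫ x : V3,
          (ε₀ * nsq (E t₂ x) + nsq (B t₂ x) / μ₀ + ∫ v : V3, m * nsq v * f t₂ x v)) := by
  have hEi : ∀ i, ContDiff ℝ 1 fun p : ℝ × V3 => E p.1 p.2 i := contDiff_pi.1 hE
  have hBi : ∀ i, ContDiff ℝ 1 fun p : ℝ × V3 => B p.1 p.2 i := contDiff_pi.1 hB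
  have hEt : ∀ t, ContDiff ℝ 1 (E t) := fun t =>
    hE.comp (by fun_prop : ContDiff ℝ 1 fun x : V3 => (t, x))
  have hBt : ∀ t, ContDiff ℝ 1 (B t) := fun t =>
    hB.comp (by fun_prop : ContDiff ℝ 1 fun x : V3 => (t, x))
  have hft : ∀ t, ContDiff ℝ 1 fun z : V3 × V3 => f t z.1 z.2 := fun t =>
    hf.comp (by fun_prop : ContDiff ℝ 1 fun z : V3 × V3 => (t, z))
  have hfs : ∀ t, HasCompactSupport fun z : V3 × V3 => f t z.1 z.2 := fun t => by
    obtain ⟨K, hK, h0⟩ := hsuppf {t} isCompact_singleton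
    exact HasCompactSupport.intro hK fun z hz => h0 t rfl z.1 z.2 hz
  have hEs : ∀ t, HasCompactSupport (E t) := fun t => by
    obtain ⟨K, hK, h0⟩ := hsuppEB {t} isCompact_singleton
    exact HasCompactSupport.intro hK fun z hz => (h0 t rfl z hz).1
  let w : ℝ → V3 → ℝ := fun t x => ε₀ * nsq (E t x) + nsq (B t x) / μ₀
  let k : ℝ → V3 × V3 → ℝ := fun t z => m * nsq z.2 * f t z.1 z.2
  have hw : ContDiff ℝ 1 fun p : ℝ × V3 => w p.1 p.2 :=
    (contDiff_const.mul (contDiff_nsq.comp hE)).add ((contDiff_nsq.comp hB).div_const _)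
  have hk : ContDiff ℝ 1 fun p : ℝ × V3 × V3 => k p.1 p.2 :=
    (contDiff_const.mul (contDiff_nsq.comp (contDiff_snd.comp contDiff_snd))).mul hf
  have hws : ∀ I : Set ℝ, IsCompact I → ∃ K : Set V3, IsCompact K ∧
      ∀ t ∈ I, ∀ x ∉ K, w t x = 0 := fun I hI => by
    obtain ⟨K, hK, h0⟩ := hsuppEB I hI
    exact ⟨K, hK, fun t ht x hx => by simp [w, h0 t ht x hx, nsq]⟩
  have hks : ∀ I : Set ℝ, IsCompact I → ∃ K : Set (V3 × V3), IsCompact K ∧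
      ∀ t ∈ I, ∀ z ∉ K, k t z = 0 := fun I hI => by
    obtain ⟨K, hK, h0⟩ := hsuppf I hI
    exact ⟨K, hK, fun t ht z hz => by simp [k, h0 t ht z.1 z.2 hz]⟩
  have hwd := hasDerivAt_integral_of_compact volume hw hws
  have hkd := hasDerivAt_integral_of_compact volume hk hks
  -- the energy as a sum of an integral over `x` and an integral over `(x, v)`
  have hsplit : ∀ t, (∫ x : V3,
      (ε₀ * nsq (E t x) + nsq (B t x) / μ₀ + ∫ v : V3, m * nsq v * f t x v))
      = (∫ x, w t x) + ∫ z, k t z := fun t => by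
    have hwi : Integrable (w t) := by
      obtain ⟨K, hK, h0⟩ := hws {t} isCompact_singleton
      exact (hw.continuous.comp (by fun_prop : Continuous fun x : V3 => (t, x))
        ).integrable_of_hasCompactSupport (HasCompactSupport.intro hK (h0 t rfl))
    have hki : Integrable (k t) (volume.prod volume) := by
      obtain ⟨K, hK, h0⟩ := hks {t} isCompact_singleton
      exact (hk.continuous.comp (by fun_prop : Continuous fun z : V3 × V3 => (t, z))
        ).integrable_of_hasCompactSupport (HasCompactSupport.intro hK (h0 t rfl))
    rw [Measure.volume_eq_prod, integral_prod _ hki]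
    exact integral_add hwi hki.integral_prod_left
  -- the kinetic energy grows at the rate of the work done by the electric field
  have hkin : ∀ t, (∫ z : V3 × V3, deriv (fun s => k s z) t)
      = ∫ z : V3 × V3, 2 * q * ∑ s, E t z.1 s * (f t z.1 z.2 * z.2 s) := fun t => by
    have h := nullInt_kinetic q m hm.ne' (f t) (ptt f t) (E t) (B t) (hft t) (hEt t) (hBt t)
      (hfs t) (hvlasov t)
    have hi := (hkd t).1
    have hde : ∀ z : V3 × V3, deriv (fun s => k s z) t = m * nsq z.2 * ptt f t z.1 z.2 :=
      fun z => by simp only [k, ptt, deriv_const_mul_field]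
    simp only [hde] at hi ⊢
    have hP : Integrable fun z : V3 × V3 => 2 * q * ∑ s, E t z.1 s * (f t z.1 z.2 * z.2 s) := by
      simpa [Pi.sub_def] using hi.sub h.1
    have h0 := h.2
    rw [integral_sub hi hP] at h0
    linarith
  -- the field energy decreases at that same rate
  have hem : ∀ t, (∫ x : V3, deriv (fun s => w s x) t)
      = -∫ z : V3 × V3, 2 * q * ∑ s, E t z.1 s * (f t z.1 z.2 * z.2 s) := fun t => by
    have hP : Integrable (fun z : V3 × V3 => 2 * q * ∑ s, E t z.1 s * (f t z.1 z.2 * z.2 s))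
        (volume.prod volume) := by
      have hc : Continuous fun z : V3 × V3 => 2 * q * ∑ s, E t z.1 s * (f t z.1 z.2 * z.2 s) := by
        have h1 := (hft t).continuous
        have h2 := (hEt t).continuous
        fun_prop
      obtain ⟨K, hK, h0⟩ := hsuppf {t} isCompact_singleton
      exact hc.integrable_of_hasCompactSupport
        (HasCompactSupport.intro hK fun z hz => by simp [h0 t rfl z.1 z.2 hz])
    have hJ : ∀ x, (∫ v : V3, 2 * q * ∑ s, E t x s * (f t x v * v s))
        = 2 * ∑ s, E t x s * (q * ∫ v : V3, f t x v * v s) := fun x => by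
      have hi : ∀ s, Integrable fun v : V3 => f t x v * v s := fun s => by
        obtain ⟨K, hK, h0⟩ := hsuppf {t} isCompact_singleton
        have h1 : Continuous fun v => f t x v :=
          (hft t).continuous.comp (by fun_prop : Continuous fun v : V3 => (x, v))
        refine Continuous.integrable_of_hasCompactSupport (by fun_prop)
          (HasCompactSupport.intro (hK.image continuous_snd) fun v hv => ?_)
        rw [h0 t rfl x v fun h => hv ⟨_, h, rfl⟩, zero_mul]
      rw [integral_const_mul, integral_finsetSum _ fun s _ => (hi s).const_mul _]
      simp only [integral_const_mul, Finset.mul_sum]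
      exact Finset.sum_congr rfl fun _ _ => by ring
    rw [Measure.volume_eq_prod, integral_prod _ hP]
    have hPi := hP.integral_prod_left
    simp only [hJ] at hPi ⊢
    have h := (nullInt_poynting (E t) (B t) (hEt t) (hBt t) (hEs t)).const_mul (2 / μ₀)
    have hde : ∀ x, deriv (fun s => w s x) t
        = 2 / μ₀ * ((∑ i, E t x i * curl3 (B t) x i) - ∑ i, B t x i * curl3 (E t) x i)
          - 2 * ∑ s, E t x s * (q * ∫ v : V3, f t x v * v s) := fun x => by
      have hd : ∀ {F : ℝ → V3 → V3}, (∀ i, ContDiff ℝ 1 fun p : ℝ × V3 => F p.1 p.2 i) →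
          HasDerivAt (fun s => nsq (F s x))
            (∑ i, 2 * F t x i * deriv (fun s => F s x i) t) t := fun {F} hF => by
        refine HasDerivAt.fun_sum fun i _ => ?_
        have h1 : DifferentiableAt ℝ (fun s => F s x i) t :=
          ((hF i).comp (by fun_prop : ContDiff ℝ 1 fun s : ℝ => (s, x))).differentiable
            (by norm_num) t
        simpa using h1.hasDerivAt.fun_pow 2
      have hA : ∀ i, deriv (fun s => E s x i) t
          = c ^ 2 * curl3 (B t) x i - (q * ∫ v : V3, f t x v * v i) / ε₀ := fun i => by
        have := hampere t x i
        rw [neg_div] at this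
        linarith
      have hF : ∀ i, deriv (fun s => B s x i) t = -curl3 (E t) x i := fun i => by
        linarith [hfaraday t x i]
      have hcc : c ^ 2 = 1 / (ε₀ * μ₀) := by
        field_simp
        linarith
      rw [(((hd hEi).const_mul ε₀).fun_add ((hd hBi).div_const μ₀)).deriv]
      simp only [hA, hF, hcc, Fin.sum_univ_three]
      field_simp
      ring
    simp only [hde]
    rw [integral_sub h.1 hPi, h.2, zero_sub]
  intro t₁ t₂
  rw [hsplit, hsplit]
  congr 1
  refine is_const_of_deriv_eq_zero (f := fun t => (∫ x, w t x) + ∫ z, k t z)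
    (fun t => ((hwd t).2.fun_add (hkd t).2).differentiableAt) (fun t => ?_) t₁ t₂
  rw [((hwd t).2.fun_add (hkd t).2).deriv, hkin, hem, neg_add_cancel]
end
end

section
/- Assume f : ℝ³ → ℝ is smooth, strictly positive, and satisfies two-sided Gaussian bounds c e^{−a‖v‖²} ≤ f(v) ≤ C e^{−b‖v‖²} (with 0 < c ≤ C, a ≥ b > 0), with all partial derivatives of f decaying faster than any polynomial. Then the entropy dissipation of the Fokker–Planck–Landau operator is nonpositive: ∫_{ℝ³} C(f,f)(v) log f(v) dv ≤ 0. (Consequently, for the spatially homogeneous Landau equation ∂_t f = C(f,f), the entropy H(t) = ∫ f log f dv is nonincreasing.) -/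
/-!
Write `J` for the flux, so that `C(f,f) = div J`. Integrating by parts against `log f` and then
exchanging the names of `v` and `w` gives the classical identity
`∫ C(f,f) log f = -½ ∬ f(v) f(w) x · Φ(v - w) x`, with `x = ∇ log f(v) - ∇ log f(w)`, and
`Φ` is positive semidefinite by the Cauchy–Schwarz inequality (`Phi_quadForm_nonneg`).

What needs care is the analysis.

* Regularity of `J`. Its components are `Jₛ = ∑ₜ (Φₛₜ ⋆ f) ∂ₜf - f (Φₛₜ ⋆ ∂ₜf)`. Since
  `|Φ(u)| ≤ 2 / ‖u‖` is locally integrable on `ℝ³`, and by Peetre's inequality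
  `1 + ‖z‖ ≤ (1 + ‖v‖) (1 + ‖v - z‖)`, these convolutions can be differentiated under the integral
  sign and grow at most polynomially together with their derivatives (`conv_hasFDerivAt`,
  `conv_polyGrowth`). Hence `J` is differentiable, and `J` and its derivative decay rapidly
  (`landauFlux_props`), while `log f` grows at most quadratically (`polyGrowth_log`).
* The quotient `∇f / f`. The Gaussian lower bound alone would allow it to be exponentially large.
  A positive function with decaying second derivatives satisfies `|∂ₛf|² ≤ 4 M f` with `M` rapidly
  decaying, so that `∂ₛf ∂ₜf / f` decays rapidly (`rapidDecay_sq_div`, `rapidDecay_mul_div`). Every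
  occurrence of `1 / f` comes with such a product or with a factor `f`, which makes `J · ∇ log f`
  integrable (`integral_Cff_mul_log`), and also the unsymmetrized dissipation density on the
  product space (`integrable_dissipation`), as Fubini's theorem requires.
-/

open MeasureTheory Real
open scoped BigOperators Classical

noncomputable section

/-- Φ(u) = (‖u‖² Id − u ⊗ u)/‖u‖³ for u ≠ 0, and Φ(0) = 0. -/
def Phi (u : V3) : Matrix (Fin 3) (Fin 3) ℝ :=
  if u = 0 then 0
  else ((Real.sqrt (nsq u)) ^ 3)⁻¹ •
    (nsq u • (1 : Matrix (Fin 3) (Fin 3) ℝ) - Matrix.vecMulVec u u)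

/-- Gradient of a scalar function on ℝ³. -/
def grad (f : V3 → ℝ) (v : V3) : V3 := fun s => fderiv ℝ f v (Pi.single s 1)

/-- Divergence of a vector field on ℝ³. -/
def div3 (F : V3 → V3) (v : V3) : ℝ := ∑ s, fderiv ℝ F v (Pi.single s 1) s

/-- The inner (flux) integral of the Fokker–Planck–Landau operator. -/
def landauFlux (f : V3 → ℝ) (v : V3) : V3 :=
  ∫ w : V3, (Phi (v - w)).mulVec (f w • grad f v - f v • grad f w)

/-- The Fokker–Planck–Landau collision operator `C(f,f) = ∇_v · landauFlux`. -/
def Cff (f : V3 → ℝ) (v : V3) : ℝ := div3 (landauFlux f) v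

/-- The Lorentz electron–ion collision operator `C_L(f) = ∇_v · (Φ(v) ∇_v f)`. -/
def CL (f : V3 → ℝ) (v : V3) : ℝ := div3 (fun w => (Phi w).mulVec (grad f w)) v

/-! ### Rapidly decaying functions -/

/-- `g` decays faster than every polynomial (with no condition on derivatives). -/
def RapidDecay {E : Type*} [NormedAddCommGroup E] (g : V3 → E) : Prop :=
  ∀ k : ℕ, ∃ M : ℝ, ∀ v, (1 + ‖v‖) ^ k * ‖g v‖ ≤ M

/-- `g` is bounded by some polynomial in `‖v‖`. -/
def PolyGrowth {E : Type*} [NormedAddCommGroup E] (g : V3 → E) : Prop :=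
  ∃ (k : ℕ) (M : ℝ), ∀ v, ‖g v‖ ≤ M * (1 + ‖v‖) ^ k

section Decay

variable {E F G : Type*} [NormedAddCommGroup E] [NormedAddCommGroup F] [NormedAddCommGroup G]

lemma RapidDecay.mul_polyGrowth {g : V3 → E} {p : V3 → F} {u : V3 → G} (hg : RapidDecay g)
    (hp : PolyGrowth p) (hu : ∀ v, ‖u v‖ ≤ ‖g v‖ * ‖p v‖) : RapidDecay u := by
  obtain ⟨n, N, hN⟩ := hp
  have hN0 : 0 ≤ N := by simpa using (norm_nonneg _).trans (hN 0)
  intro k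
  obtain ⟨M, hM⟩ := hg (k + n)
  refine ⟨M * N, fun v => ?_⟩
  calc (1 + ‖v‖) ^ k * ‖u v‖ ≤ (1 + ‖v‖) ^ k * (‖g v‖ * (N * (1 + ‖v‖) ^ n)) := by
        gcongr
        exact (hu v).trans (by gcongr; exact hN v)
    _ = ((1 + ‖v‖) ^ (k + n) * ‖g v‖) * N := by ring
    _ ≤ M * N := by gcongr; exact hM v

lemma PolyGrowth.const (c : E) : PolyGrowth (fun _ => c) := ⟨0, ‖c‖, fun v => by simp⟩

lemma RapidDecay.of_le {g : V3 → E} {u : V3 → G} (hg : RapidDecay g) (K : ℝ)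
    (hu : ∀ v, ‖u v‖ ≤ K * ‖g v‖) : RapidDecay u :=
  hg.mul_polyGrowth (p := fun _ => K) (PolyGrowth.const K) fun v => by
    refine (hu v).trans ?_
    rw [mul_comm]
    gcongr
    exact le_abs_self K

lemma RapidDecay.polyGrowth {g : V3 → E} (hg : RapidDecay g) : PolyGrowth g := by
  obtain ⟨M, hM⟩ := hg 0
  exact ⟨0, M, fun v => by simpa using hM v⟩

lemma RapidDecay.add {g h : V3 → E} (hg : RapidDecay g) (hh : RapidDecay h) :
    RapidDecay (fun v => g v + h v) := by
  intro k
  obtain ⟨M, hM⟩ := hg k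
  obtain ⟨N, hN⟩ := hh k
  refine ⟨M + N, fun v => ?_⟩
  calc (1 + ‖v‖) ^ k * ‖g v + h v‖ ≤ (1 + ‖v‖) ^ k * (‖g v‖ + ‖h v‖) := by
        gcongr
        exact norm_add_le _ _
    _ ≤ M + N := by linarith [hM v, hN v]

lemma RapidDecay.neg {g : V3 → E} (hg : RapidDecay g) : RapidDecay (fun v => - g v) :=
  hg.of_le 1 fun v => by simp

lemma RapidDecay.sub {g h : V3 → E} (hg : RapidDecay g) (hh : RapidDecay h) :
    RapidDecay (fun v => g v - h v) := by
  simpa only [sub_eq_add_neg] using hg.add hh.neg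

lemma RapidDecay.sum {ι : Type*} (s : Finset ι) {g : ι → V3 → E} (hg : ∀ i ∈ s, RapidDecay (g i)) :
    RapidDecay (fun v => ∑ i ∈ s, g i v) := by
  induction s using Finset.induction_on with
  | empty => exact fun k => ⟨0, fun v => by simp⟩
  | insert i s hi ih =>
    simp only [Finset.sum_insert hi]
    exact (hg i (by simp)).add (ih fun j hj => hg j (by simp [hj]))

lemma RapidDecay.mul_right {g p : V3 → ℝ} (hg : RapidDecay g) (hp : PolyGrowth p) :
    RapidDecay (fun v => g v * p v) :=
  hg.mul_polyGrowth hp fun _ => (norm_mul _ _).le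

lemma RapidDecay.mul_left {g p : V3 → ℝ} (hg : RapidDecay g) (hp : PolyGrowth p) :
    RapidDecay (fun v => p v * g v) :=
  hg.mul_polyGrowth hp fun _ => by rw [norm_mul, mul_comm]

/-- In `ℝ³` the weight `(1 + ‖v‖)⁻⁴` is integrable. -/
lemma RapidDecay.integrable {g : V3 → E} (hg : RapidDecay g)
    (hm : AEStronglyMeasurable g volume) : Integrable g := by
  obtain ⟨M, hM⟩ := hg 4
  have h : Integrable (fun v : V3 => (1 + ‖v‖) ^ (-(4 : ℝ))) :=
    integrable_one_add_norm (by simp; norm_num)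
  refine (h.const_mul M).mono' hm (Filter.Eventually.of_forall fun v => ?_)
  have h0 : (0 : ℝ) < 1 + ‖v‖ := by positivity
  rw [Real.rpow_neg h0.le, ← div_eq_mul_inv, le_div_iff₀ (by positivity), mul_comm]
  exact_mod_cast hM v

end Decay

/-- Peetre's inequality. -/
lemma one_add_norm_le_mul (v z : V3) : 1 + ‖z‖ ≤ (1 + ‖v‖) * (1 + ‖v - z‖) := by
  have h : ‖z‖ ≤ ‖v‖ + ‖v - z‖ := by
    calc ‖z‖ = ‖v - (v - z)‖ := by simp
      _ ≤ _ := norm_sub_le _ _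
  nlinarith [norm_nonneg v, norm_nonneg (v - z), mul_nonneg (norm_nonneg v) (norm_nonneg (v - z))]

/-- The model kernel `‖z‖⁻¹ (1 + ‖z‖)⁻⁴`, which dominates all integrands below: its singularity is
integrable in dimension three and it decays fast enough at infinity. -/
def modelKer (z : V3) : ℝ := ‖z‖⁻¹ * ((1 + ‖z‖) ^ 4)⁻¹

lemma integrable_modelKer : Integrable modelKer := by
  have := (integrable_fun_norm_addHaar (volume : Measure V3)
    (f := fun r : ℝ => r⁻¹ * ((1 + r) ^ 4)⁻¹)).2
  refine this ?_
  have h : Integrable (fun r : ℝ => (1 + ‖r‖) ^ (-(3 : ℝ))) :=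
    integrable_one_add_norm (by simp)
  refine (h.integrableOn (s := Set.Ioi 0)).mono' (by fun_prop) ?_
  refine (ae_restrict_iff' measurableSet_Ioi).2 (Filter.Eventually.of_forall fun r hr => ?_)
  have hr : 0 < r := hr
  simp only [Module.finrank_fintype_fun_eq_card, Fintype.card_fin, smul_eq_mul, Real.norm_eq_abs,
    abs_of_pos hr]
  rw [Real.rpow_neg (by positivity)]
  norm_cast
  rw [abs_of_nonneg (by positivity)]
  calc r ^ 2 * (r⁻¹ * ((1 + r) ^ 4)⁻¹) = r * ((1 + r) ^ 4)⁻¹ := by field_simp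
    _ ≤ (1 + r) * ((1 + r) ^ 4)⁻¹ := by gcongr; linarith
    _ = ((1 + r) ^ 3)⁻¹ := by field_simp

/-! ### Convolution with a weakly singular kernel -/

section Conv

variable {E : Type*} [NormedAddCommGroup E] [NormedSpace ℝ E]

/-- By Peetre's inequality, a kernel with a `‖z‖⁻¹` singularity times a translate of a rapidly
decaying function is dominated by `modelKer`, with polynomial dependence on the translation. -/
lemma conv_integrand_bound {φ : V3 → ℝ} {K : ℝ} (hφ : ∀ z, |φ z| ≤ K * ‖z‖⁻¹)
    {g : V3 → E} (hg : RapidDecay g) :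
    ∃ M, 0 ≤ M ∧ ∀ v z, ‖φ z • g (v - z)‖ ≤ M * (1 + ‖v‖) ^ 4 * modelKer z := by
  obtain ⟨M, hM⟩ := hg 4
  have hM0 : 0 ≤ M := le_trans (by positivity) (hM 0)
  have hK : 0 ≤ K := by
    have h := (abs_nonneg _).trans (hφ (fun _ => 1))
    simpa [Pi.norm_def] using h
  refine ⟨K * M, by positivity, fun v z => ?_⟩
  have h1 : ‖g (v - z)‖ ≤ M * ((1 + ‖v‖) ^ 4 * ((1 + ‖z‖) ^ 4)⁻¹) := by
    have h2 : (1 + ‖z‖) ^ 4 ≤ (1 + ‖v‖) ^ 4 * (1 + ‖v - z‖) ^ 4 := by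
      rw [← mul_pow]
      gcongr
      exact one_add_norm_le_mul v z
    rw [← mul_assoc, ← div_eq_mul_inv, le_div_iff₀ (by positivity)]
    calc ‖g (v - z)‖ * (1 + ‖z‖) ^ 4
        ≤ ‖g (v - z)‖ * ((1 + ‖v‖) ^ 4 * (1 + ‖v - z‖) ^ 4) := by gcongr
      _ = ((1 + ‖v - z‖) ^ 4 * ‖g (v - z)‖) * (1 + ‖v‖) ^ 4 := by ring
      _ ≤ _ := by gcongr; exact hM _
  rw [norm_smul, Real.norm_eq_abs]
  calc |φ z| * ‖g (v - z)‖
      ≤ (K * ‖z‖⁻¹) * (M * ((1 + ‖v‖) ^ 4 * ((1 + ‖z‖) ^ 4)⁻¹)) := by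
        gcongr
        exact hφ z
    _ = _ := by unfold modelKer; ring

variable {φ : V3 → ℝ} {K : ℝ} (hφm : Measurable φ) (hφ : ∀ z, |φ z| ≤ K * ‖z‖⁻¹)

include hφm in
lemma conv_aesm {g : V3 → E} (hc : Continuous g) (v : V3) :
    AEStronglyMeasurable (fun z => φ z • g (v - z)) volume :=
  hφm.aestronglyMeasurable.smul
    (hc.comp (continuous_const.sub continuous_id)).aestronglyMeasurable

include hφm hφ in
lemma conv_integrable {g : V3 → E} (hc : Continuous g) (hg : RapidDecay g) (v : V3) :
    Integrable (fun z => φ z • g (v - z)) := by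
  obtain ⟨M, -, hM⟩ := conv_integrand_bound hφ hg
  exact (integrable_modelKer.const_mul _).mono' (conv_aesm hφm hc v)
    (Filter.Eventually.of_forall fun z => hM v z)

include hφ in
lemma conv_polyGrowth {g : V3 → E} (hg : RapidDecay g) :
    PolyGrowth (fun v => ∫ z, φ z • g (v - z)) := by
  obtain ⟨M, -, hM⟩ := conv_integrand_bound hφ hg
  refine ⟨4, M * ∫ z, modelKer z, fun v => ?_⟩
  have := norm_integral_le_of_norm_le (integrable_modelKer.const_mul (M * (1 + ‖v‖) ^ 4))
    (Filter.Eventually.of_forall fun z => hM v z)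
  rw [integral_const_mul] at this
  linarith

include hφm hφ in
lemma conv_hasFDerivAt {g : V3 → ℝ} (hg1 : ContDiff ℝ 1 g) (hg : RapidDecay g)
    (hg' : RapidDecay (fderiv ℝ g)) (v : V3) :
    HasFDerivAt (fun v => ∫ z, φ z • g (v - z)) (∫ z, φ z • fderiv ℝ g (v - z)) v := by
  obtain ⟨M, hM0, hM⟩ := conv_integrand_bound hφ hg'
  refine hasFDerivAt_integral_of_dominated_of_fderiv_le (s := Metric.ball v 1)
    (bound := fun z => M * (1 + (‖v‖ + 1)) ^ 4 * modelKer z)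
    (F' := fun v z => φ z • fderiv ℝ g (v - z))
    (Metric.ball_mem_nhds v one_pos)
    (Filter.Eventually.of_forall fun x => conv_aesm hφm hg1.continuous x)
    (conv_integrable hφm hφ hg1.continuous hg v)
    (conv_aesm hφm (hg1.continuous_fderiv one_ne_zero) v)
    (Filter.Eventually.of_forall fun z x hx => ?_)
    (integrable_modelKer.const_mul _)
    (Filter.Eventually.of_forall fun z x hx => ?_)
  · refine (hM x z).trans ?_
    have hx' : ‖x‖ ≤ ‖v‖ + 1 := by
      have h1 : ‖x - v‖ < 1 := by simpa [dist_eq_norm] using hx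
      have h2 := norm_le_norm_add_norm_sub' x v
      linarith
    have h0 : 0 ≤ modelKer z := by unfold modelKer; positivity
    gcongr
  · have h1 : HasFDerivAt g (fderiv ℝ g (x - z)) (x - z) :=
      (hg1.differentiable one_ne_zero _).hasFDerivAt
    have h2 : HasFDerivAt (fun y : V3 => g (y - z)) (fderiv ℝ g (x - z)) x :=
      by
      simpa [Function.comp_def] using h1.comp x ((hasFDerivAt_id x).sub_const z)
    exact h2.const_smul (φ z)

end Conv

/-! ### Gradient, logarithm and kernel bounds -/

lemma RapidDecay.of_pow_mul {E : Type*} [NormedAddCommGroup E] {g : V3 → E}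
    (h : ∀ k : ℕ, ∃ M : ℝ, ∀ v : V3, ‖v‖ ^ k * ‖g v‖ ≤ M) : RapidDecay g := by
  intro k
  obtain ⟨M, hM⟩ := h k
  obtain ⟨N, hN⟩ := h 0
  refine ⟨2 ^ (k - 1) * (N + M), fun v => ?_⟩
  calc (1 + ‖v‖) ^ k * ‖g v‖ ≤ (2 ^ (k - 1) * (1 ^ k + ‖v‖ ^ k)) * ‖g v‖ := by
        gcongr
        exact add_pow_le zero_le_one (norm_nonneg v) k
    _ = 2 ^ (k - 1) * (‖v‖ ^ 0 * ‖g v‖ + ‖v‖ ^ k * ‖g v‖) := by ring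
    _ ≤ _ := by gcongr; exacts [hN v, hM v]

lemma norm_e (s : Fin 3) : ‖(Pi.single s 1 : V3)‖ = 1 := by
  have h := Pi.norm_single (G := fun _ : Fin 3 => ℝ) (i := s) (1 : ℝ)
  simpa using h

lemma abs_grad_le (f : V3 → ℝ) (v : V3) (s : Fin 3) : |grad f v s| ≤ ‖fderiv ℝ f v‖ := by
  have h := (fderiv ℝ f v).le_opNorm (Pi.single s 1)
  rw [norm_e, mul_one] at h
  exact h

lemma contDiff_grad {f : V3 → ℝ} (hf : ContDiff ℝ 2 f) (s : Fin 3) :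
    ContDiff ℝ 1 (fun v => grad f v s) :=
  (hf.fderiv_right (m := 1) (by norm_num)).clm_apply contDiff_const

lemma fderiv_grad {f : V3 → ℝ} (hf : ContDiff ℝ 2 f) (v : V3) (s : Fin 3) :
    ‖fderiv ℝ (fun v => grad f v s) v‖ ≤ ‖fderiv ℝ (fderiv ℝ f) v‖ := by
  have h1 : HasFDerivAt (fderiv ℝ f) (fderiv ℝ (fderiv ℝ f) v) v :=
    (((hf.fderiv_right (m := 1) (by norm_num)).differentiable one_ne_zero) v).hasFDerivAt
  have h2 := h1.clm_apply (hasFDerivAt_const (Pi.single s 1 : V3) v)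
  have h3 : HasFDerivAt (fun v => grad f v s)
      ((fderiv ℝ (fderiv ℝ f) v).flip (Pi.single s 1)) v := by
    simpa [grad] using h2
  rw [h3.fderiv]
  simpa only [norm_e, mul_one, ContinuousLinearMap.opNorm_flip] using
    (fderiv ℝ (fderiv ℝ f) v).flip.le_opNorm (Pi.single s 1)

/-- A positive function with rapidly decaying second derivatives satisfies `|∂ₛf|² ≤ 4 M f` with
`M` rapidly decaying: otherwise a step of length `∂ₛf / (2 M)` against the gradient would make `f`
negative. This controls the Fisher information density although `1 / f` may be huge. -/
lemma rapidDecay_sq_div {f : V3 → ℝ} (hf : ContDiff ℝ 2 f) (hpos : ∀ v, 0 < f v)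
    (h1 : RapidDecay (fderiv ℝ f)) (h2 : RapidDecay (fderiv ℝ (fderiv ℝ f))) (s : Fin 3) :
    RapidDecay (fun v => grad f v s ^ 2 / f v) := by
  intro k
  obtain ⟨M1, hM1⟩ := h1 k
  obtain ⟨M2, hM2⟩ := h2 k
  have hM10 : 0 ≤ M1 := le_trans (by positivity) (hM1 0)
  have hM20 : 0 ≤ M2 := le_trans (by positivity) (hM2 0)
  set L := 2 ^ k * M2 + M1 + 1 with hL
  have hL0 : 0 < L := by positivity
  refine ⟨4 * L, fun v => ?_⟩
  set P := (1 + ‖v‖) ^ k with hP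
  have hP0 : 0 < P := by positivity
  set M := L / P with hM
  have hM0 : 0 < M := by positivity
  set g := grad f v s with hg
  have hgM : |g| ≤ M := by
    rw [hM, le_div_iff₀ hP0]
    calc |g| * P ≤ ‖fderiv ℝ f v‖ * P := by gcongr; exact abs_grad_le f v s
      _ = P * ‖fderiv ℝ f v‖ := mul_comm _ _
      _ ≤ M1 := hM1 v
      _ ≤ L := by rw [hL]; nlinarith [mul_nonneg (pow_nonneg (zero_le_two (α := ℝ)) k) hM20]
  have hD2 : ∀ x ∈ Metric.closedBall v 1, ‖fderiv ℝ (fderiv ℝ f) x‖ ≤ M := by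
    intro x hx
    have hx1 : ‖v - x‖ ≤ 1 := by
      rw [← dist_eq_norm, dist_comm]
      simpa using hx
    have hvx : 1 + ‖v‖ ≤ 2 * (1 + ‖x‖) := by
      have h3 : ‖v‖ ≤ ‖x‖ + ‖v - x‖ := by
        simpa using norm_add_le x (v - x)
      linarith [norm_nonneg x]
    rw [hM, le_div_iff₀ hP0]
    calc ‖fderiv ℝ (fderiv ℝ f) x‖ * P ≤ ‖fderiv ℝ (fderiv ℝ f) x‖ * (2 * (1 + ‖x‖)) ^ k := by
          rw [hP]
          gcongr
      _ = 2 ^ k * ((1 + ‖x‖) ^ k * ‖fderiv ℝ (fderiv ℝ f) x‖) := by rw [mul_pow]; ring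
      _ ≤ 2 ^ k * M2 := by gcongr; exact hM2 x
      _ ≤ L := by rw [hL]; linarith
  set τ := g / (2 * M) with hτ
  have hτ1 : |τ| ≤ 1 := by
    rw [hτ, abs_div, abs_of_pos (show 0 < 2 * M by positivity), div_le_one (by positivity)]
    linarith
  have hsub : Metric.closedBall v |τ| ⊆ Metric.closedBall v 1 :=
    Metric.closedBall_subset_closedBall hτ1
  have hdf : Differentiable ℝ (fderiv ℝ f) :=
    (hf.fderiv_right (m := 1) (by norm_num)).differentiable one_ne_zero
  have hD1 : ∀ x ∈ Metric.closedBall v |τ|, ‖fderiv ℝ f x - fderiv ℝ f v‖ ≤ M * |τ| := by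
    intro x hx
    refine ((convex_closedBall v |τ|).norm_image_sub_le_of_norm_fderiv_le (𝕜 := ℝ)
      (fun y _ => hdf y) (fun y hy => hD2 y (hsub hy))
      (Metric.mem_closedBall_self (abs_nonneg τ)) hx).trans ?_
    gcongr
    simpa [dist_eq_norm] using hx
  have key := (convex_closedBall v |τ|).norm_image_sub_le_of_norm_fderiv_le' (𝕜 := ℝ)
      (fun y _ => (hf.differentiable two_ne_zero) y) hD1
      (Metric.mem_closedBall_self (abs_nonneg τ))
      (show v + (-τ) • (Pi.single s 1 : V3) ∈ Metric.closedBall v |τ| by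
        simp [norm_smul, norm_e])
  simp only [add_sub_cancel_left, map_smul, norm_smul, norm_e] at key
  have hfd : fderiv ℝ f v (Pi.single s 1) = g := rfl
  rw [hfd, Real.norm_eq_abs, Real.norm_eq_abs, abs_neg, smul_eq_mul] at key
  have k1 := (abs_le.1 key).2
  have k2 := hpos (v + (-τ) • (Pi.single s 1 : V3))
  have k3 : M * |τ| * (|τ| * 1) = M * τ ^ 2 := by rw [← sq_abs τ]; ring
  have k4 : M * τ ^ 2 - τ * g = - (g ^ 2 / (4 * M)) := by rw [hτ]; field_simp; ring
  have k5 : g ^ 2 / (4 * M) ≤ f v := by linarith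
  rw [div_le_iff₀ (by positivity)] at k5
  rw [Real.norm_of_nonneg (div_nonneg (sq_nonneg _) (hpos v).le), mul_div_assoc',
    div_le_iff₀ (hpos v)]
  calc P * g ^ 2 ≤ P * (f v * (4 * M)) := by gcongr
    _ = 4 * L * f v := by rw [hM]; field_simp

lemma rapidDecay_mul_div {f : V3 → ℝ} (hf : ContDiff ℝ 2 f) (hpos : ∀ v, 0 < f v)
    (h1 : RapidDecay (fderiv ℝ f)) (h2 : RapidDecay (fderiv ℝ (fderiv ℝ f))) (s t : Fin 3) :
    RapidDecay (fun v => grad f v s * grad f v t / f v) := by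
  refine ((rapidDecay_sq_div hf hpos h1 h2 s).add (rapidDecay_sq_div hf hpos h1 h2 t)).of_le 1
    fun v => ?_
  have h := hpos v
  rw [one_mul, ← add_div, norm_div, norm_div]
  refine div_le_div_of_nonneg_right ?_ (norm_nonneg _)
  rw [Real.norm_eq_abs, Real.norm_eq_abs,
    abs_of_nonneg (add_nonneg (sq_nonneg (grad f v s)) (sq_nonneg (grad f v t))), abs_le]
  constructor <;> nlinarith [sq_nonneg (grad f v s + grad f v t),
    sq_nonneg (grad f v s - grad f v t), sq_nonneg (grad f v s), sq_nonneg (grad f v t)]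

lemma sq_norm_le_nsq (v : V3) : ‖v‖ ^ 2 ≤ nsq v := by
  have h : ‖v‖ ≤ √(nsq v) := by
    rw [pi_norm_le_iff_of_nonneg (Real.sqrt_nonneg _)]
    intro i
    refine Real.abs_le_sqrt ?_
    exact Finset.single_le_sum (f := fun i => v i ^ 2) (fun i _ => sq_nonneg _) (Finset.mem_univ i)
  have h0 : 0 ≤ nsq v := Finset.sum_nonneg fun i _ => sq_nonneg _
  calc ‖v‖ ^ 2 ≤ √(nsq v) ^ 2 := by gcongr
    _ = nsq v := Real.sq_sqrt h0

lemma nsq_nonneg (v : V3) : 0 ≤ nsq v := (sq_nonneg _).trans (sq_norm_le_nsq v)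

lemma nsq_le (v : V3) : nsq v ≤ 3 * ‖v‖ ^ 2 := by
  have h : ∀ i ∈ Finset.univ, v i ^ 2 ≤ ‖v‖ ^ 2 := fun i _ => by
    rw [← sq_abs]
    have := norm_le_pi_norm v i
    rw [Real.norm_eq_abs] at this
    gcongr
  simpa [nsq] using Finset.sum_le_card_nsmul _ _ _ h

lemma polyGrowth_log {f : V3 → ℝ} {c C a b : ℝ} (hc : 0 < c) (hcC : c ≤ C) (hb : 0 < b)
    (hba : b ≤ a) (hlow : ∀ v, c * Real.exp (-a * nsq v) ≤ f v)
    (hup : ∀ v, f v ≤ C * Real.exp (-b * nsq v)) : PolyGrowth (fun v => Real.log (f v)) := by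
  refine ⟨2, |Real.log c| + |Real.log C| + 3 * a, fun v => ?_⟩
  have hC := hc.trans_le hcC
  have h0 : 0 < c * Real.exp (-a * nsq v) := by positivity
  have h1 := Real.log_le_log h0 (hlow v)
  have h2 := Real.log_le_log (h0.trans_le (hlow v)) (hup v)
  rw [Real.log_mul (by positivity) (by positivity), Real.log_exp] at h1 h2
  have h3 := nsq_nonneg v
  have h4 := nsq_le v
  have h5 : (1 : ℝ) ≤ (1 + ‖v‖) ^ 2 := one_le_pow₀ (by linarith [norm_nonneg v])
  have h6 : ‖v‖ ^ 2 ≤ (1 + ‖v‖) ^ 2 := by gcongr; linarith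
  have h7 : a * nsq v ≤ 3 * a * (1 + ‖v‖) ^ 2 := by
    have := mul_le_mul_of_nonneg_left (h4.trans (by linarith : 3 * ‖v‖ ^ 2 ≤ 3 * (1 + ‖v‖) ^ 2))
      (hb.le.trans hba)
    linarith
  have h8 : |Real.log c| ≤ |Real.log c| * (1 + ‖v‖) ^ 2 := le_mul_of_one_le_right (abs_nonneg _) h5
  have h9 : |Real.log C| ≤ |Real.log C| * (1 + ‖v‖) ^ 2 := le_mul_of_one_le_right (abs_nonneg _) h5
  have h10 : 0 ≤ b * nsq v := by positivity
  have h11 : 0 ≤ a * nsq v := mul_nonneg (hb.le.trans hba) h3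
  rw [Real.norm_eq_abs, abs_le]
  constructor <;> nlinarith [neg_abs_le (Real.log c), le_abs_self (Real.log C),
    abs_nonneg (Real.log c), abs_nonneg (Real.log C)]

lemma Phi_apply (u : V3) (s t : Fin 3) :
    Phi u s t = ((√(nsq u)) ^ 3)⁻¹ * (nsq u * (1 : Matrix (Fin 3) (Fin 3) ℝ) s t - u s * u t) := by
  unfold Phi
  split_ifs with h
  · simp [h, nsq]
  · simp [Matrix.vecMulVec_apply]

lemma measurable_Phi (s t : Fin 3) : Measurable (fun u => Phi u s t) := by
  simp only [Phi_apply, nsq]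
  fun_prop

lemma abs_Phi_le (u : V3) (s t : Fin 3) : |Phi u s t| ≤ 2 * ‖u‖⁻¹ := by
  by_cases hu : u = 0
  · simp [hu, Phi]
  have hn : 0 < ‖u‖ := norm_pos_iff.2 hu
  have h1 := sq_norm_le_nsq u
  have hr : ‖u‖ ≤ √(nsq u) := Real.le_sqrt_of_sq_le h1
  have hr0 : 0 < √(nsq u) := hn.trans_le hr
  have hsq : √(nsq u) ^ 2 = nsq u := Real.sq_sqrt (nsq_nonneg u)
  have h2 : |nsq u * (1 : Matrix (Fin 3) (Fin 3) ℝ) s t - u s * u t| ≤ 2 * nsq u := by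
    have a1 : |(1 : Matrix (Fin 3) (Fin 3) ℝ) s t| ≤ 1 := by
      rw [Matrix.one_apply]
      split_ifs <;> simp
    have a2 : |u s * u t| ≤ nsq u := by
      rw [abs_mul]
      refine le_trans ?_ h1
      rw [sq]
      gcongr
      exacts [norm_le_pi_norm u s, norm_le_pi_norm u t]
    calc _ ≤ |nsq u * (1 : Matrix (Fin 3) (Fin 3) ℝ) s t| + |u s * u t| := abs_sub _ _
      _ ≤ nsq u * 1 + nsq u := by
        rw [abs_mul, abs_of_nonneg (nsq_nonneg u)]
        have := nsq_nonneg u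
        gcongr
      _ = _ := by ring
  rw [Phi_apply, abs_mul, abs_of_nonneg (by positivity)]
  calc _ ≤ (√(nsq u) ^ 3)⁻¹ * (2 * nsq u) := by gcongr
    _ = 2 * (√(nsq u))⁻¹ := by rw [← hsq]; simp; field_simp
    _ ≤ 2 * ‖u‖⁻¹ := by gcongr

lemma Phi_sub_comm (v w : V3) : Phi (w - v) = Phi (v - w) := by
  ext s t
  simp only [Phi_apply, nsq, Pi.sub_apply]
  simp only [fun i => sub_sq_comm (w i) (v i)]
  ring

/-- `Φ(u)` is positive semidefinite, by the Cauchy–Schwarz inequality. -/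
lemma Phi_quadForm_nonneg (u x : V3) : 0 ≤ ∑ s, ∑ t, Phi u s t * (x s * x t) := by
  have h : ∑ s, ∑ t, Phi u s t * (x s * x t) = ((√(nsq u)) ^ 3)⁻¹ *
      ((u 0 * x 1 - u 1 * x 0) ^ 2 + (u 0 * x 2 - u 2 * x 0) ^ 2
        + (u 1 * x 2 - u 2 * x 1) ^ 2) := by
    simp only [Phi_apply]
    generalize ((√(nsq u)) ^ 3)⁻¹ = r
    simp [nsq, Fin.sum_univ_three, Matrix.one_apply]
    ring
  rw [h]
  positivity

/-! ### Differentiability and decay of the flux -/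

/-- The convolution of the entry `Φₛₜ` with a scalar function. -/
def convPhi (s t : Fin 3) (g : V3 → ℝ) (v : V3) : ℝ := ∫ z, Phi z s t • g (v - z)

lemma convPhi_eq (s t : Fin 3) (g : V3 → ℝ) (v : V3) :
    convPhi s t g v = ∫ w, Phi (v - w) s t * g w := by
  rw [convPhi, ← integral_sub_left_eq_self _ volume v]
  simp

lemma convPhi_integrable (s t : Fin 3) {g : V3 → ℝ} (hc : Continuous g) (hg : RapidDecay g)
    (v : V3) : Integrable (fun w => Phi (v - w) s t * g w) := by
  have h := (conv_integrable (measurable_Phi s t) (fun z => abs_Phi_le z s t) hc hg v).comp_sub_left v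
  simpa using h

section Flux

variable {f : V3 → ℝ} (hf : ContDiff ℝ 2 f) (h0 : RapidDecay f) (h1 : RapidDecay (fderiv ℝ f))
  (h2 : RapidDecay (fderiv ℝ (fderiv ℝ f)))

include h1 in
lemma rapidDecay_grad (s : Fin 3) : RapidDecay (fun v => grad f v s) :=
  h1.of_le 1 fun v => by simpa using abs_grad_le f v s

include hf h2 in
lemma rapidDecay_fderiv_grad (s : Fin 3) : RapidDecay (fderiv ℝ (fun v => grad f v s)) :=
  h2.of_le 1 fun v => by simpa using fderiv_grad hf v s

include hf h0 h1 in
lemma landauFlux_integrand_integrable (v : V3) (s : Fin 3) :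
    Integrable (fun w => ∑ t, Phi (v - w) s t * (f w * grad f v t - f v * grad f w t)) := by
  refine integrable_finsetSum _ fun t _ => ?_
  have i1 := (convPhi_integrable s t hf.continuous h0 v).mul_const (grad f v t)
  have i2 := (convPhi_integrable s t (contDiff_grad hf t).continuous
    (rapidDecay_grad h1 t) v).const_mul (f v)
  refine (i1.sub i2).congr (Filter.Eventually.of_forall fun w => ?_)
  simp only [Pi.sub_apply]
  ring

include hf h0 h1 in
lemma landauFlux_apply_integral (v : V3) (s : Fin 3) :
    landauFlux f v s = ∫ w, ∑ t, Phi (v - w) s t * (f w * grad f v t - f v * grad f w t) := by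
  have hrw : ∀ w : V3, ∀ s : Fin 3,
      (Phi (v - w)).mulVec (f w • grad f v - f v • grad f w) s
        = ∑ t, Phi (v - w) s t * (f w * grad f v t - f v * grad f w t) := fun w s => by
    simp [Matrix.mulVec, dotProduct]
  rw [landauFlux, eval_integral]
  · simp only [hrw]
  · intro i
    simp only [hrw]
    exact landauFlux_integrand_integrable hf h0 h1 v i

include hf h0 h1 in
lemma landauFlux_apply (v : V3) (s : Fin 3) :
    landauFlux f v s = ∑ t, (convPhi s t f v * grad f v t
      - f v * convPhi s t (fun w => grad f w t) v) := by
  rw [landauFlux_apply_integral hf h0 h1]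
  have i1 : ∀ t, Integrable (fun w => Phi (v - w) s t * f w * grad f v t) := fun t =>
    (convPhi_integrable s t hf.continuous h0 v).mul_const (grad f v t)
  have i2 : ∀ t, Integrable (fun w => f v * (Phi (v - w) s t * grad f w t)) := fun t =>
    (convPhi_integrable s t (contDiff_grad hf t).continuous
      (rapidDecay_grad h1 t) v).const_mul (f v)
  have hrw : ∀ w t, Phi (v - w) s t * (f w * grad f v t - f v * grad f w t)
      = Phi (v - w) s t * f w * grad f v t - f v * (Phi (v - w) s t * grad f w t) := by
    intros
    ring
  have i3 : ∀ t, Integrable (fun w => Phi (v - w) s t * f w * grad f v t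
      - f v * (Phi (v - w) s t * grad f w t)) := fun t => (i1 t).sub (i2 t)
  simp only [hrw]
  rw [integral_finsetSum _ fun t _ => i3 t]
  refine Finset.sum_congr rfl fun t _ => ?_
  rw [integral_sub (i1 t) (i2 t), integral_mul_const, integral_const_mul, convPhi_eq, convPhi_eq]

lemma convPhi_hasFDerivAt (s t : Fin 3) {g : V3 → ℝ} (hg1 : ContDiff ℝ 1 g) (hg : RapidDecay g)
    (hg' : RapidDecay (fderiv ℝ g)) (v : V3) :
    HasFDerivAt (convPhi s t g) (∫ z, Phi z s t • fderiv ℝ g (v - z)) v :=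
  conv_hasFDerivAt (measurable_Phi s t) (fun z => abs_Phi_le z s t) hg1 hg hg' v

lemma convPhi_polyGrowth (s t : Fin 3) {g : V3 → ℝ} (hg : RapidDecay g) :
    PolyGrowth (convPhi s t g) :=
  conv_polyGrowth (fun z => abs_Phi_le z s t) hg

lemma convPhi_fderiv_polyGrowth (s t : Fin 3) {g : V3 → ℝ} (hg1 : ContDiff ℝ 1 g)
    (hg : RapidDecay g) (hg' : RapidDecay (fderiv ℝ g)) :
    PolyGrowth (fderiv ℝ (convPhi s t g)) := by
  rw [funext fun v => (convPhi_hasFDerivAt s t hg1 hg hg' v).fderiv]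
  exact conv_polyGrowth (fun z => abs_Phi_le z s t) hg'

/-- Products of a rapidly decaying function and a function of polynomial growth, both with a
derivative of the same kind. -/
lemma rapidDecay_fderiv_mul {g p : V3 → ℝ} (hg : Differentiable ℝ g) (hp : Differentiable ℝ p)
    (dg : RapidDecay g) (dg' : RapidDecay (fderiv ℝ g)) (dp : PolyGrowth p)
    (dp' : PolyGrowth (fderiv ℝ p)) : RapidDecay (fderiv ℝ (fun v => g v * p v)) := by
  have h : fderiv ℝ (fun v => g v * p v) = fun v => g v • fderiv ℝ p v + p v • fderiv ℝ g v :=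
    funext fun v => fderiv_fun_mul (hg v) (hp v)
  rw [h]
  refine RapidDecay.add (dg.mul_polyGrowth dp' fun v => ?_) (dg'.mul_polyGrowth dp fun v => ?_)
  · rw [norm_smul]
  · rw [norm_smul, mul_comm]

include hf h0 h1 h2 in
lemma landauFlux_props (s : Fin 3) : Differentiable ℝ (fun v => landauFlux f v s) ∧
    RapidDecay (fun v => landauFlux f v s) ∧
    RapidDecay (fderiv ℝ (fun v => landauFlux f v s)) := by
  have hf1 : ContDiff ℝ 1 f := hf.of_le (by norm_num)
  have hfd : Differentiable ℝ f := hf1.differentiable one_ne_zero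
  have hg1 := contDiff_grad hf
  have hgd : ∀ t, Differentiable ℝ (fun v => grad f v t) :=
    fun t => (hg1 t).differentiable one_ne_zero
  have hg := rapidDecay_grad h1
  have hg' := rapidDecay_fderiv_grad hf h2
  have dA : ∀ t, Differentiable ℝ (convPhi s t f) := fun t v =>
    (convPhi_hasFDerivAt s t hf1 h0 h1 v).differentiableAt
  have dB : ∀ t, Differentiable ℝ (convPhi s t (fun w => grad f w t)) := fun t v =>
    (convPhi_hasFDerivAt s t (hg1 t) (hg t) (hg' t) v).differentiableAt
  have pA := fun t => convPhi_polyGrowth s t h0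
  have pB := fun t => convPhi_polyGrowth s t (hg t)
  have pA' := fun t => convPhi_fderiv_polyGrowth s t hf1 h0 h1
  have pB' := fun t => convPhi_fderiv_polyGrowth s t (hg1 t) (hg t) (hg' t)
  have hJ : (fun v => landauFlux f v s) = fun v => ∑ t, (grad f v t * convPhi s t f v
      - f v * convPhi s t (fun w => grad f w t) v) := by
    funext v
    rw [landauFlux_apply hf h0 h1]
    simp only [mul_comm]
  rw [hJ]
  have d1 : ∀ t, Differentiable ℝ (fun v => grad f v t * convPhi s t f v) :=
    fun t => (hgd t).mul (dA t)
  have d2 : ∀ t, Differentiable ℝ (fun v => f v * convPhi s t (fun w => grad f w t) v) :=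
    fun t => hfd.mul (dB t)
  have d3 : ∀ t, Differentiable ℝ (fun v => grad f v t * convPhi s t f v
      - f v * convPhi s t (fun w => grad f w t) v) := fun t => (d1 t).sub (d2 t)
  refine ⟨?_, ?_, ?_⟩
  · exact Differentiable.fun_sum fun t _ => d3 t
  · exact RapidDecay.sum _ fun t _ => ((hg t).mul_right (pA t)).sub (h0.mul_right (pB t))
  · have : (fderiv ℝ fun v => ∑ t, (grad f v t * convPhi s t f v
      - f v * convPhi s t (fun w => grad f w t) v)) = fun v => ∑ t,
        (fderiv ℝ (fun v => grad f v t * convPhi s t f v) v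
          - fderiv ℝ (fun v => f v * convPhi s t (fun w => grad f w t) v) v) := by
      funext v
      rw [fderiv_fun_sum fun t _ => d3 t v]
      exact Finset.sum_congr rfl fun t _ => fderiv_fun_sub (d1 t v) (d2 t v)
    rw [this]
    exact RapidDecay.sum _ fun t _ =>
      (rapidDecay_fderiv_mul (hgd t) (dA t) (hg t) (hg' t) (pA t) (pA' t)).sub
      (rapidDecay_fderiv_mul hfd (dB t) h0 h1 (pB t) (pB' t))

/-! ### Entropy dissipation -/

/-- Integrability on the product space of a kernel with the singularity of `Φ` against a tensor
product of rapidly decaying functions, by comparison with a convolution integrand. -/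
lemma integrable_prod_Phi (s t : Fin 3) {p q : V3 → ℝ} (hp : Measurable p) (hq : Measurable q)
    (dp : RapidDecay p) (dq : RapidDecay q) :
    Integrable (fun z : V3 × V3 => Phi (z.1 - z.2) s t * (p z.1 * q z.2))
      (volume.prod volume) := by
  obtain ⟨M, hM⟩ := dp 4
  -- Four powers of the weight on `q` are spent on the decay of the kernel, by Peetre's inequality.
  have dq' : Integrable (fun w : V3 => (1 + ‖w‖) ^ 4 * |q w|) := by
    refine RapidDecay.integrable ?_ (by fun_prop)
    refine dq.mul_polyGrowth (p := fun w : V3 => (1 + ‖w‖) ^ 4) ⟨4, 1, fun w => ?_⟩ fun w => ?_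
    · rw [Real.norm_of_nonneg (by positivity), one_mul]
    · rw [norm_mul, mul_comm]
      simp
  have hM0 : 0 ≤ M := le_trans (by positivity) (hM 0)
  have hc := (dq'.convolution_integrand (ContinuousLinearMap.mul ℝ ℝ) integrable_modelKer).const_mul
    (2 * M)
  refine hc.mono' ?_ (Filter.Eventually.of_forall fun z => ?_)
  · have := (measurable_Phi s t).comp (measurable_fst.sub measurable_snd : Measurable
      (fun z : V3 × V3 => z.1 - z.2))
    exact (this.mul ((hp.comp measurable_fst).mul (hq.comp measurable_snd))).aestronglyMeasurable
  · obtain ⟨v, w⟩ := z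
    simp only [ContinuousLinearMap.mul_apply', norm_mul, Real.norm_eq_abs]
    have hpe : |p v| ≤ M * ((1 + ‖v - w‖) ^ 4)⁻¹ * (1 + ‖w‖) ^ 4 := by
      have h3 : (1 + ‖v - w‖) ^ 4 ≤ (1 + ‖v‖) ^ 4 * (1 + ‖w‖) ^ 4 := by
        rw [← mul_pow]
        gcongr
        nlinarith [norm_sub_le v w, mul_nonneg (norm_nonneg v) (norm_nonneg w)]
      have h4 : |p v| * (1 + ‖v - w‖) ^ 4 ≤ M * (1 + ‖w‖) ^ 4 := by
        calc _ ≤ |p v| * ((1 + ‖v‖) ^ 4 * (1 + ‖w‖) ^ 4) := by gcongr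
          _ = ((1 + ‖v‖) ^ 4 * |p v|) * (1 + ‖w‖) ^ 4 := by ring
          _ ≤ _ := by gcongr; exact hM v
      rw [← le_div_iff₀ (by positivity)] at h4
      refine h4.trans_eq ?_
      field_simp
    calc |Phi (v - w) s t| * (|p v| * |q w|)
        ≤ (2 * ‖v - w‖⁻¹) * ((M * ((1 + ‖v - w‖) ^ 4)⁻¹ * (1 + ‖w‖) ^ 4) * |q w|) := by
          gcongr
          exact abs_Phi_le _ s t
      _ = _ := by unfold modelKer; ring

/-- The entropy dissipation density before symmetrization in `v` and `w`:
`∇ log f(v) · Φ(v - w) (f(w) ∇f(v) - f(v) ∇f(w))`. -/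
def dissipation (f : V3 → ℝ) (z : V3 × V3) : ℝ :=
  ∑ s, ∑ t, Phi (z.1 - z.2) s t *
    ((f z.2 * grad f z.1 t - f z.1 * grad f z.2 t) * (grad f z.1 s / f z.1))

include hf h0 h1 h2 in
lemma integrable_dissipation (hpos : ∀ v, 0 < f v) :
    Integrable (dissipation f) (volume.prod volume) := by
  have hg := fun t => (contDiff_grad hf t).continuous
  refine integrable_finsetSum _ fun s _ => integrable_finsetSum _ fun t _ => ?_
  have i1 := integrable_prod_Phi s t (p := fun v => grad f v s * grad f v t / f v) (q := f)
    (((hg s).mul (hg t)).div hf.continuous fun v => (hpos v).ne').measurable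
    hf.continuous.measurable (rapidDecay_mul_div hf hpos h1 h2 s t) h0
  have i2 := integrable_prod_Phi s t (p := fun v => grad f v s) (q := fun v => grad f v t)
    (hg s).measurable (hg t).measurable (rapidDecay_grad h1 s) (rapidDecay_grad h1 t)
  refine (i1.sub i2).congr (Filter.Eventually.of_forall fun z => ?_)
  have := (hpos z.1).ne'
  simp only [Pi.sub_apply]
  field_simp

/-- Symmetrization: the two orderings of `(v, w)` add up to
`f(v) f(w) x · Φ(v - w) x` with `x = ∇ log f(v) - ∇ log f(w)`. -/
lemma dissipation_add_swap_nonneg (hpos : ∀ v, 0 < f v) (z : V3 × V3) :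
    0 ≤ dissipation f z + dissipation f z.swap := by
  obtain ⟨v, w⟩ := z
  have h := mul_nonneg (mul_pos (hpos v) (hpos w)).le
    (Phi_quadForm_nonneg (v - w) (fun s => grad f v s / f v - grad f w s / f w))
  refine h.trans_eq ?_
  have hv := (hpos v).ne'
  have hw := (hpos w).ne'
  simp only [dissipation, Prod.swap_prod_mk, Phi_sub_comm v w, ← Finset.sum_add_distrib,
    Finset.mul_sum]
  refine Finset.sum_congr rfl fun s _ => Finset.sum_congr rfl fun t _ => ?_
  field_simp
  ring

include hf h0 h1 h2 in
lemma integral_dissipation_nonneg (hpos : ∀ v, 0 < f v) :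
    0 ≤ ∫ v, ∫ w, dissipation f (v, w) := by
  have hi := integrable_dissipation hf h0 h1 h2 hpos
  have h3 : 0 ≤ ∫ z, (dissipation f z + dissipation f z.swap) ∂(volume.prod volume) :=
    integral_nonneg fun z => dissipation_add_swap_nonneg hpos z
  have hs : Integrable (fun z => dissipation f z.swap) (volume.prod volume) := hi.swap
  rw [integral_add hi hs, integral_prod_swap] at h3
  rw [← integral_prod _ hi]
  linarith

include hf h0 h1 h2 in
/-- Integration by parts against `log f`. The boundary-free formula applies because
`J · ∇ log f` is integrable: `J` is linear in `f` and `∇f`, and `∇f ⊗ ∇f / f` decays rapidly. -/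
lemma integral_Cff_mul_log (hpos : ∀ v, 0 < f v)
    (hlog : PolyGrowth (fun v => Real.log (f v))) :
    ∫ v, Cff f v * Real.log (f v) = - ∫ v, ∫ w, dissipation f (v, w) := by
  have hfd : Differentiable ℝ f := hf.differentiable two_ne_zero
  have hJ := landauFlux_props hf h0 h1 h2
  have hJm := fun s => ((hJ s).1.continuous).measurable
  have hlm : Measurable (fun v => Real.log (f v)) := Real.measurable_log.comp hf.continuous.measurable
  have hgm := fun s => (contDiff_grad hf s).continuous.measurable
  have hdlog : ∀ v s, fderiv ℝ (fun v => Real.log (f v)) v (Pi.single s 1)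
      = grad f v s / f v := fun v s => by
    rw [fderiv.log (hfd v) (hpos v).ne']
    simp [grad, div_eq_inv_mul]
  have e1 : ∀ v, Cff f v * Real.log (f v)
      = ∑ s, fderiv ℝ (fun v => landauFlux f v s) v (Pi.single s 1) * Real.log (f v) := fun v => by
    rw [Cff, div3, Finset.sum_mul]
    refine Finset.sum_congr rfl fun s _ => ?_
    have h3 : DifferentiableAt ℝ (landauFlux f) v := differentiableAt_pi.2 fun i => (hJ i).1 v
    rw [(hasFDerivAt_pi'.1 h3.hasFDerivAt s).fderiv]
    simp
  have i1 : ∀ s, Integrable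
      (fun v => fderiv ℝ (fun v => landauFlux f v s) v (Pi.single s 1) * Real.log (f v)) := by
    intro s
    refine RapidDecay.integrable ((hJ s).2.2.mul_polyGrowth hlog fun v => ?_)
      ((measurable_fderiv_apply_const ℝ _ _).mul hlm).aestronglyMeasurable
    rw [norm_mul]
    gcongr
    have h := (fderiv ℝ (fun v => landauFlux f v s) v).le_opNorm (Pi.single s 1)
    rw [norm_e, mul_one] at h
    exact h
  have i2 : ∀ s, Integrable (fun v => landauFlux f v s * (grad f v s / f v)) := by
    intro s
    refine RapidDecay.integrable ?_
      ((hJm s).mul ((hgm s).div hf.continuous.measurable)).aestronglyMeasurable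
    have hrw : (fun v => landauFlux f v s * (grad f v s / f v)) = fun v => ∑ t,
        (grad f v s * grad f v t / f v * convPhi s t f v
          - grad f v s * convPhi s t (fun w => grad f w t) v) := by
      funext v
      have := (hpos v).ne'
      rw [landauFlux_apply hf h0 h1, Finset.sum_mul]
      refine Finset.sum_congr rfl fun t _ => ?_
      field_simp
    rw [hrw]
    exact RapidDecay.sum _ fun t _ =>
      ((rapidDecay_mul_div hf hpos h1 h2 s t).mul_right (convPhi_polyGrowth s t h0)).sub
      ((rapidDecay_grad h1 s).mul_right (convPhi_polyGrowth s t (rapidDecay_grad h1 t)))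
  have i3 : ∀ s, Integrable (fun v => landauFlux f v s * Real.log (f v)) := fun s =>
    ((hJ s).2.1.mul_right hlog).integrable ((hJm s).mul hlm).aestronglyMeasurable
  have parts : ∀ s, ∫ v, fderiv ℝ (fun v => landauFlux f v s) v (Pi.single s 1) * Real.log (f v)
      = - ∫ v, landauFlux f v s * (grad f v s / f v) := by
    intro s
    have h := integral_mul_fderiv_eq_neg_fderiv_mul_of_integrable (μ := (volume : Measure V3))
      (v := Pi.single s 1) (i1 s) (by simpa only [hdlog] using i2 s) (i3 s)
      (fun v _ => (hJ s).1 v) (fun v _ => (hfd v).log (hpos v).ne')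
    simp only [hdlog] at h
    rw [h, neg_neg]
  have e2 : ∀ v, ∫ w, dissipation f (v, w) = ∑ s, landauFlux f v s * (grad f v s / f v) := by
    intro v
    have hrw : ∀ w, dissipation f (v, w) = ∑ s, (∑ t, Phi (v - w) s t *
        (f w * grad f v t - f v * grad f w t)) * (grad f v s / f v) := fun w => by
      simp only [dissipation, Finset.sum_mul, mul_assoc]
    simp only [hrw]
    rw [integral_finsetSum _ fun s _ =>
      (landauFlux_integrand_integrable hf h0 h1 v s).mul_const _]
    refine Finset.sum_congr rfl fun s _ => ?_
    rw [integral_mul_const, landauFlux_apply_integral hf h0 h1]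
  simp only [e1, e2]
  rw [integral_finsetSum _ fun s _ => i1 s, integral_finsetSum _ fun s _ => i2 s,
    ← Finset.sum_neg_distrib]
  exact Finset.sum_congr rfl fun s _ => parts s

end Flux

/-- the FPL operator dissipates entropy: `∫ C(f,f) log f ≤ 0`. -/
theorem landau_entropy_dissipation
    (f : V3 → ℝ) (hf : ContDiff ℝ (⊤ : ℕ∞) f) (hpos : ∀ v, 0 < f v)
    (c C a b : ℝ) (hc : 0 < c) (hcC : c ≤ C) (hb : 0 < b) (hba : b ≤ a)
    (hlow : ∀ v, c * Real.exp (-a * nsq v) ≤ f v)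
    (hup : ∀ v, f v ≤ C * Real.exp (-b * nsq v))
    (hdecay : ∀ n k : ℕ, ∃ M : ℝ, ∀ v : V3, ‖v‖ ^ k * ‖iteratedFDeriv ℝ n f v‖ ≤ M) :
    (∫ v : V3, Cff f v * Real.log (f v)) ≤ 0 := by
  have hd0 : RapidDecay f := .of_pow_mul fun k => by
    simpa only [norm_iteratedFDeriv_zero] using hdecay 0 k
  have hd1 : RapidDecay (fderiv ℝ f) := .of_pow_mul fun k => by
    simpa only [norm_iteratedFDeriv_one] using hdecay 1 k
  have hd2 : RapidDecay (fderiv ℝ (fderiv ℝ f)) := .of_pow_mul fun k => by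
    simpa only [← norm_iteratedFDeriv_fderiv (n := 1), norm_iteratedFDeriv_one] using hdecay 2 k
  have hf2 : ContDiff ℝ 2 f := contDiff_infty.1 hf 2
  rw [integral_Cff_mul_log hf2 hd0 hd1 hd2 hpos (polyGrowth_log hc hcC hb hba hlow hup)]
  linarith [integral_dissipation_nonneg hf2 hd0 hd1 hd2 hpos]
end
end

section
/- Let n, T, m > 0 and u ∈ ℝ³, and let M(v) = n (m/(2πT))^{3/2} exp( −m ‖v − u‖² / (2T) ) be the Maxwellian distribution with density n, mean velocity u and temperature T. Then the Fokker–Planck–Landau operator vanishes identically on M: C(M,M)(v) = 0 for every v ∈ ℝ³; i.e. Maxwellian distribution functions are equilibrium states of the FPL operator. -/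
/-! The integrand of the flux vanishes pointwise. The gradient of the Maxwellian is
`∇M(v) = -(m/T) M(v) (v - u)`, so `M(w) ∇M(v) - M(v) ∇M(w)` is a multiple of `v - w`
(`grad_maxwellian`), and the kernel `Φ(v - w)`, a multiple of the orthogonal projection
onto the complement of `v - w`, annihilates `v - w` (`Phi_mulVec_self`). Hence the flux is
the zero field and so is its divergence. -/

open MeasureTheory Real
open scoped BigOperators Classical

noncomputable section

theorem Phi_mulVec_self (z : V3) : (Phi z).mulVec z = 0 := by
  unfold Phi
  split_ifs with h
  · simp
  · rw [Matrix.smul_mulVec, Matrix.sub_mulVec, Matrix.smul_mulVec, Matrix.one_mulVec,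
      Matrix.vecMulVec_mulVec]
    ext i
    simp [nsq, dotProduct, Fin.sum_univ_three]
    right
    ring

theorem hasFDerivAt_nsq_sub (u v : V3) :
    HasFDerivAt (fun w : V3 => nsq (w - u))
      (∑ s, (2 * (v s - u s)) • (ContinuousLinearMap.proj s : V3 →L[ℝ] ℝ)) v := by
  have key : ∀ s : Fin 3, HasFDerivAt (fun w : V3 => (w s - u s) ^ 2)
      ((2 * (v s - u s)) • (ContinuousLinearMap.proj s : V3 →L[ℝ] ℝ)) v := by
    intro s
    have h := ((hasFDerivAt_apply (𝕜 := ℝ) s v).sub_const (u s)).pow 2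
    simpa using h
  simpa [nsq] using HasFDerivAt.fun_sum (u := Finset.univ) fun s _ => key s

/-- The gradient of a Gaussian with prefactor `A`. -/
theorem grad_maxwellian (A T m : ℝ) (u v : V3) :
    grad (fun w => A * Real.exp (-(m * nsq (w - u)) / (2 * T))) v =
      (-(m / T) * (A * Real.exp (-(m * nsq (v - u)) / (2 * T)))) • (v - u) := by
  ext s
  have h := ((((hasFDerivAt_nsq_sub u v).const_mul m).neg.mul_const (2 * T)⁻¹).exp).const_mul A
  simp only [← div_eq_mul_inv] at h
  have h' := h.fderiv
  simp only [Pi.neg_apply] at h'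
  rw [grad, h']
  simp [Fin.sum_univ_three, Pi.single_apply]
  fin_cases s <;> simp <;> ring

/-- Maxwellian distribution functions are equilibrium states of the
Fokker–Planck–Landau operator: `C(M,M) ≡ 0`. -/
theorem landau_maxwellian_equilibrium
    (n T m : ℝ) (hn : 0 < n) (hT : 0 < T) (hm : 0 < m) (u : V3) :
    ∀ v : V3,
      Cff (fun w => n * (m / (2 * Real.pi * T)) ^ ((3 : ℝ) / 2) *
        Real.exp (-(m * nsq (w - u)) / (2 * T))) v = 0 := by
  intro v
  have hflux : landauFlux (fun w => n * (m / (2 * Real.pi * T)) ^ ((3 : ℝ) / 2) *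
      Real.exp (-(m * nsq (w - u)) / (2 * T))) = fun _ => 0 := by
    funext v
    refine integral_eq_zero_of_ae (Filter.Eventually.of_forall fun w => ?_)
    simp only [grad_maxwellian]
    set A := n * (m / (2 * Real.pi * T)) ^ ((3 : ℝ) / 2)
    set a := A * Real.exp (-(m * nsq (v - u)) / (2 * T))
    set b := A * Real.exp (-(m * nsq (w - u)) / (2 * T))
    -- The two occurrences of `u` cancel, leaving a multiple of `v - w`.
    have hdir : b • (-(m / T) * a) • (v - u) - a • (-(m / T) * b) • (w - u)
        = (-(m / T) * a * b) • (v - w) := by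
      ext i
      simp
      ring
    rw [hdir, Matrix.mulVec_smul, Phi_mulVec_self, smul_zero]
    rfl
  rw [Cff, hflux]
  simp [div3]
end
end

section
/- Let M > 0, Δx > 0, x_i ∈ ℝ, and let f_{i−1}, f_i, f_{i+1} ∈ [0, M]. Define the slope limiter ε_i by: ε_i = 0 if (f_{i+1} − f_i)(f_i − f_{i−1}) < 0; otherwise ε_i = min(1, 2(M − f_i)/(f_i − f_{i+1})) if f_{i+1} − f_i < 0; ε_i = min(1, 2 f_i/(f_{i+1} − f_i)) if f_{i+1} − f_i > 0; and ε_i = 1 if f_{i+1} = f_i. Define the reconstruction f_h(x) = f_i + ε_i ((x − x_i)/Δx)(f_{i+1} − f_i) for x ∈ [x_i − Δx/2, x_i + Δx/2]. Then the reconstruction conserves the cell average, (1/Δx) ∫_{x_i−Δx/2}^{x_i+Δx/2} f_h(x) dx = f_i, and satisfies the maximum principle 0 ≤ f_h(x) ≤ M for every x ∈ [x_i − Δx/2, x_i + Δx/2]. -/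
/-! The reconstruction is `f0 + s t` with `s = ε (f1 - f0)` and `t = (x - xi) / Δx ∈ [-1/2, 1/2]`.
The term linear in `x - xi` is odd about the cell centre, so it integrates to zero. Since `|t| ≤ 1/2`,
the maximum principle reduces to `|s| ≤ 2 f0` and `|s| ≤ 2 (M - f0)`
(`abs_limited_slope_le`). Both are clear when `s = 0`, in particular at a local
extremum, where `ε = 0`. Otherwise one of these bounds comes from `ε ≤ 1`, because the midpoint of
`f0` and `f1` lies in `[0, M]`, and the other is the bound imposed by the second argument of `min`. -/

open MeasureTheory

/-- The limited increment `ε (f1 - f0)` is at most twice the distance from `f0` to either end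
of `[0, M]`. -/
theorem abs_limited_slope_le {M fm f0 f1 ε : ℝ}
    (hf0 : f0 ∈ Set.Icc (0:ℝ) M) (hf1 : f1 ∈ Set.Icc (0:ℝ) M)
    (hε : ε = if (f1 - f0) * (f0 - fm) < 0 then 0
      else if f1 - f0 < 0 then min 1 (2 * (M - f0) / (f0 - f1))
      else if 0 < f1 - f0 then min 1 (2 * f0 / (f1 - f0))
      else 1) :
    |ε * (f1 - f0)| ≤ 2 * f0 ∧ |ε * (f1 - f0)| ≤ 2 * (M - f0) := by
  obtain ⟨h0, h0M⟩ := hf0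
  obtain ⟨h1, h1M⟩ := hf1
  have hM0 : 0 ≤ M - f0 := sub_nonneg.2 h0M
  split_ifs at hε with hext hneg hpos
  · subst hε
    simp [h0, h0M]
  · have hd : 0 < f0 - f1 := by linarith
    have hε0 : 0 ≤ ε := hε ▸ le_min zero_le_one (by positivity)
    have hle1 : ε ≤ 1 := hε ▸ min_le_left _ _
    have hle2 : ε * (f0 - f1) ≤ 2 * (M - f0) := (le_div_iff₀ hd).1 (hε ▸ min_le_right _ _)
    have habs : |ε * (f1 - f0)| = ε * (f0 - f1) := by
      rw [abs_mul, abs_of_nonneg hε0, abs_of_neg hneg, neg_sub]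
    rw [habs]
    exact ⟨by nlinarith, hle2⟩
  · have hε0 : 0 ≤ ε := hε ▸ le_min zero_le_one (by positivity)
    have hle1 : ε ≤ 1 := hε ▸ min_le_left _ _
    have hle2 : ε * (f1 - f0) ≤ 2 * f0 := (le_div_iff₀ hpos).1 (hε ▸ min_le_right _ _)
    rw [abs_of_nonneg (mul_nonneg hε0 hpos.le)]
    exact ⟨hle2, by nlinarith⟩
  · have h : f1 - f0 = 0 := by linarith
    simp [h, h0, h0M]

/-- the slope-limited second order reconstruction conserves the cell
average and satisfies the maximum principle `0 ≤ f_h ≤ M` on the cell. -/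
theorem reconstruction_average_and_maximum_principle
    (M Δx xi fm f0 f1 : ℝ) (hM : 0 < M) (hΔx : 0 < Δx)
    (hfm : fm ∈ Set.Icc (0:ℝ) M) (hf0 : f0 ∈ Set.Icc (0:ℝ) M) (hf1 : f1 ∈ Set.Icc (0:ℝ) M)
    (ε : ℝ)
    (hε : ε = if (f1 - f0) * (f0 - fm) < 0 then 0
      else if f1 - f0 < 0 then min 1 (2 * (M - f0) / (f0 - f1))
      else if 0 < f1 - f0 then min 1 (2 * f0 / (f1 - f0))
      else 1)
    (fh : ℝ → ℝ)
    (hfh : ∀ x : ℝ, fh x = f0 + ε * ((x - xi) / Δx) * (f1 - f0)) :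
    (1 / Δx) * (∫ x in (xi - Δx / 2)..(xi + Δx / 2), fh x) = f0 ∧
    ∀ x ∈ Set.Icc (xi - Δx / 2) (xi + Δx / 2), 0 ≤ fh x ∧ fh x ≤ M := by
  constructor
  · have hfun : fh = fun x => f0 + ε * (f1 - f0) / Δx * (x - xi) := by
      funext x
      rw [hfh]
      ring
    have hint : ∫ x in (xi - Δx / 2)..(xi + Δx / 2), fh x = f0 * Δx := by
      rw [hfun, intervalIntegral.integral_add intervalIntegrable_const
        (Continuous.intervalIntegrable (by fun_prop) _ _), intervalIntegral.integral_const,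
        intervalIntegral.integral_const_mul, intervalIntegral.integral_sub
        (Continuous.intervalIntegrable (by fun_prop) _ _) intervalIntegrable_const, integral_id,
        intervalIntegral.integral_const]
      simp only [smul_eq_mul]
      ring
    rw [hint]
    field_simp
  · rintro x ⟨hx1, hx2⟩
    obtain ⟨hs0, hsM⟩ := abs_limited_slope_le hf0 hf1 hε
    have ht : |(x - xi) / Δx| ≤ 1 / 2 := by
      rw [abs_div, abs_of_pos hΔx, div_le_iff₀ hΔx, abs_le]
      constructor <;> linarith
    have hprod : |ε * ((x - xi) / Δx) * (f1 - f0)| ≤ |ε * (f1 - f0)| * (1 / 2) := by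
      rw [mul_right_comm, abs_mul]
      gcongr
    obtain ⟨hlo, hhi⟩ := abs_le.1 hprod
    rw [hfh]
    constructor <;> linarith
end

section
/- Let f ≥ 0 be a real number and a, b ∈ ℝ. Set A = max(a, −f), B = max(b, −f), and θ = 1 if A + B ≤ 0, θ = min(1, f/(A + B)) if A + B > 0. Define the limited increments a′ = θA and b′ = θB. Then f + a′ ≥ 0, f + b′ ≥ 0, and f − a′ − b′ ≥ 0; i.e. the limitation procedure guarantees the nonnegativity of both reconstructed states f_r = f + a′, f_l = f + b′ and of the intermediate state f* = 3f − f_r − f_l. -/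
/-! The factor `θ` lies in `[0, 1]` and satisfies `θ * (A + B) ≤ f`. Since `A, B ≥ -f` and
`f ≥ 0`, scaling by `θ` keeps `θ * A, θ * B ≥ -θ * f ≥ -f`, which handles the two reconstructed
states; the bound on `θ * (A + B)` is exactly nonnegativity of the intermediate state. -/

/-- the limitation procedure of the fourth order MUSCL scheme guarantees
the nonnegativity of the reconstructed states `f + a′`, `f + b′` and of the
intermediate state `f − a′ − b′`. -/
theorem muscl_limitation_positivity
    (f a b : ℝ) (hf : 0 ≤ f)
    (A B θ a' b' : ℝ)
    (hA : A = max a (-f)) (hB : B = max b (-f))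
    (hθ : θ = if A + B ≤ 0 then 1 else min 1 (f / (A + B)))
    (ha' : a' = θ * A) (hb' : b' = θ * B) :
    0 ≤ f + a' ∧ 0 ≤ f + b' ∧ 0 ≤ f - a' - b' := by
  have hA' : -f ≤ A := hA ▸ le_max_right _ _
  have hB' : -f ≤ B := hB ▸ le_max_right _ _
  obtain ⟨h0, h1, h2⟩ : 0 ≤ θ ∧ θ ≤ 1 ∧ θ * (A + B) ≤ f := by
    split_ifs at hθ with h
    · subst hθ
      exact ⟨zero_le_one, le_rfl, by linarith⟩
    · have hpos : 0 < A + B := not_le.mp h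
      subst hθ
      exact ⟨le_min zero_le_one (div_nonneg hf hpos.le), min_le_left _ _,
        (le_div_iff₀ hpos).mp (min_le_right _ _)⟩
  have hθf : θ * f ≤ f := mul_le_of_le_one_left hf h1
  have hθA := mul_le_mul_of_nonneg_left hA' h0
  have hθB := mul_le_mul_of_nonneg_left hB' h0
  subst ha' hb'
  refine ⟨?_, ?_, ?_⟩ <;> linarith
end

section
/- Let N ≥ 1 be an integer, let c, Δt, Δx > 0, and let E, E′, B, B′ : ℤ/Nℤ → ℝ satisfy, for every i ∈ ℤ/Nℤ, the Crank–Nicholson scheme for the source-free 1D Maxwell equations: (E′_i − E_i)/Δt + c² (B̄_{i+1} − B̄_{i−1})/(2Δx) = 0 and (B′_i − B_i)/Δt + (Ē_{i+1} − Ē_{i−1})/(2Δx) = 0, where Ē_i = (E_i + E′_i)/2 and B̄_i = (B_i + B′_i)/2. Then the discrete electromagnetic energy is exactly conserved: Σ_{i ∈ ℤ/Nℤ} ( (E′_i)²/c² + (B′_i)² ) = Σ_{i ∈ ℤ/Nℤ} ( (E_i)²/c² + (B_i)² ). -/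
/-!
Discrete Poynting theorem. With `e = E + E'` and `b = B + B'`, multiplying the two equations of the
scheme by `e i / c ^ 2` and `b i` turns the local change of energy into `-k * (F i - F (i - 1))`,
where `k = Δt / (4 Δx)` and `F i = e i * b (i + 1) + b i * e (i + 1)` is an energy flux between
neighbouring nodes. Summed over the periodic grid, the flux difference telescopes to zero.
-/

open scoped BigOperators

/-- the Crank–Nicholson scheme for the source-free 1D Maxwell equations on a
periodic grid exactly conserves the discrete electromagnetic energy. -/
theorem crank_nicholson_maxwell_energy_conservation
    (N : ℕ) [NeZero N] (hN : 1 ≤ N)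
    (c Δt Δx : ℝ) (hc : 0 < c) (hΔt : 0 < Δt) (hΔx : 0 < Δx)
    (E E' B B' : ZMod N → ℝ)
    (hAmpere : ∀ i : ZMod N,
      (E' i - E i) / Δt
        + c ^ 2 * (((B (i + 1) + B' (i + 1)) / 2 - (B (i - 1) + B' (i - 1)) / 2) / (2 * Δx)) = 0)
    (hFaraday : ∀ i : ZMod N,
      (B' i - B i) / Δt
        + (((E (i + 1) + E' (i + 1)) / 2 - (E (i - 1) + E' (i - 1)) / 2) / (2 * Δx)) = 0) :
    ∑ i : ZMod N, ((E' i) ^ 2 / c ^ 2 + (B' i) ^ 2)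
      = ∑ i : ZMod N, ((E i) ^ 2 / c ^ 2 + (B i) ^ 2) := by
  set F : ZMod N → ℝ := fun i =>
    (E i + E' i) * (B (i + 1) + B' (i + 1)) + (B i + B' i) * (E (i + 1) + E' (i + 1)) with hF
  have hlocal : ∀ i : ZMod N, ((E' i) ^ 2 / c ^ 2 + (B' i) ^ 2) - ((E i) ^ 2 / c ^ 2 + (B i) ^ 2)
      = -(Δt / (4 * Δx)) * (F i - F (i - 1)) := by
    intro i
    have hE : E' i - E i
        = -(Δt / (4 * Δx)) * c ^ 2 * ((B (i + 1) + B' (i + 1)) - (B (i - 1) + B' (i - 1))) := by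
      have h := hAmpere i
      field_simp at h ⊢
      linear_combination h
    have hB : B' i - B i
        = -(Δt / (4 * Δx)) * ((E (i + 1) + E' (i + 1)) - (E (i - 1) + E' (i - 1))) := by
      have h := hFaraday i
      field_simp at h ⊢
      linear_combination h
    have hcc : c ^ 2 * (c ^ 2)⁻¹ = 1 := mul_inv_cancel₀ (by positivity)
    simp only [hF, sub_add_cancel, div_eq_mul_inv _ (c ^ 2)]
    -- The `hcc` term cancels the factor `c ^ 2` of Ampère's law against the weight of `E ^ 2`.
    linear_combination (c ^ 2)⁻¹ * (E i + E' i) * hE + (B i + B' i) * hB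
      - (Δt / (4 * Δx)) * (E i + E' i)
        * ((B (i + 1) + B' (i + 1)) - (B (i - 1) + B' (i - 1))) * hcc
  have hshift : ∑ i : ZMod N, F (i - 1) = ∑ i : ZMod N, F i :=
    Equiv.sum_comp (Equiv.subRight (1 : ZMod N)) F
  rw [← sub_eq_zero, ← Finset.sum_sub_distrib, Finset.sum_congr rfl fun i _ => hlocal i,
    ← Finset.mul_sum, Finset.sum_sub_distrib, hshift, sub_self, mul_zero]
end

section
/- Fix Δv > 0 and grid points v_j = jΔv for j ∈ ℤ³. Let f : ℤ³ → ℝ with f_j > 0 for all j, and assume f decays fast enough (e.g. Gaussian-type decay with |log f_j| of polynomial growth) that Σ_j ‖g^ε_j‖ (1 + ‖(D^ε log f)_j‖) < ∞ for every ε ∈ {−1,+1}³, where g^ε is the discrete Lorentz flux. Then the discrete Lorentz operator dissipates the discrete entropy: Σ_{j∈ℤ³} C^{Δv}(f)(v_j) log f_j ≤ 0 (so for the scheme f^{n+1} = f^n + Δt C^{Δv}(f^n), the discrete entropy H = Δv³ Σ_j f_j log f_j is nonincreasing to first order). -/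
/-!
Write `ψ = log f` and let `g` be the flux. Summation by parts gives
`∑ C(f) ψ = -(1/8) ∑_ε ∑_j g^ε_j · (D^ε ψ)_j`, and the right-hand side is nonpositive because
`S(w)` is positive semidefinite (Lagrange's identity).

The hypothesis bounds `∑ ‖g‖` and `∑ ‖g‖ ‖D ψ‖`, but not `∑ ‖g‖ |ψ|`, so summation by parts cannot
be applied to `ψ` itself. It is applied to the truncation of `ψ` to `[-n, n]`
(`hasSum_neg_Dstar_mul`), which is bounded, so only `∑ ‖g‖ < ∞` is needed. Truncation is
1-Lipschitz and decreases absolute values, so if `∑ C(f) ψ` converges absolutely, dominated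
convergence lets `n → ∞` on both sides, with dominating functions `|C(f) ψ|` and `3 ‖g‖ ‖D ψ‖`.
If that series is not summable, its `tsum` is `0` by convention and there is nothing to prove.
-/

open scoped BigOperators Classical

noncomputable section

/-- Velocity indices: ℤ³. -/
abbrev J3 := Fin 3 → ℤ

/-- The sign ε_s ∈ {−1,+1} encoded by a boolean. -/
def sgn (σ : Fin 3 → Bool) (s : Fin 3) : ℤ := if σ s then 1 else -1

/-- The velocity grid point v_j = jΔv. -/
def vj (Δv : ℝ) (j : J3) : V3 := fun s => (j s : ℝ) * Δv

/-- Uncentered difference operator `D^ε`: the s-th component of `(D^ε ψ)_j` is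
`ε_s (ψ_{j+ε_s e_s} − ψ_j)/Δv`. -/
def Dd (Δv : ℝ) (σ : Fin 3 → Bool) (ψ : J3 → ℝ) (j : J3) : V3 :=
  fun s => (sgn σ s : ℝ) * (ψ (Function.update j s (j s + sgn σ s)) - ψ j) / Δv

/-- Formal ℓ²-adjoint of `D^ε` on vector sequences:
`(D^{*,ε} g)_j = −Σ_s ε_s (g_{j,s} − g_{j−ε_s e_s,s})/Δv`. -/
def Dstar (Δv : ℝ) (σ : Fin 3 → Bool) (g : J3 → V3) (j : J3) : ℝ :=
  -∑ s, (sgn σ s : ℝ) * (g j s - g (Function.update j s (j s - sgn σ s)) s) / Δv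

/-- S(w) = ‖w‖² Id − w ⊗ w. -/
def Smat (w : V3) : Matrix (Fin 3) (Fin 3) ℝ :=
  nsq w • (1 : Matrix (Fin 3) (Fin 3) ℝ) - Matrix.vecMulVec w w

/-- The averaged grid point ṽ_j^ε = (v_j + v_{j+ε})/2. -/
def vtilde (Δv : ℝ) (σ : Fin 3 → Bool) (j : J3) : V3 :=
  fun s => (vj Δv j s + vj Δv (fun t => j t + sgn σ t) s) / 2

/-- The discrete Lorentz flux
`g^ε_j = ‖v_j‖⁻³ S(ṽ_j^ε) f_j D^ε(log f)_j` (and `0` at `v_j = 0`). -/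
def gflux (Δv : ℝ) (σ : Fin 3 → Bool) (f : J3 → ℝ) (j : J3) : V3 :=
  if vj Δv j = 0 then 0
  else ((Real.sqrt (nsq (vj Δv j))) ^ 3)⁻¹ •
    (Smat (vtilde Δv σ j)).mulVec (f j • Dd Δv σ (fun i => Real.log (f i)) j)

/-- The discrete Lorentz operator, averaged over the eight uncentered discretizations:
`C^{Δv}(f)(v_j) = (1/8) Σ_ε (−D^{*,ε} g^ε)_j`. -/
def CLdisc (Δv : ℝ) (f : J3 → ℝ) (j : J3) : ℝ :=
  (1 / 8) * ∑ σ : Fin 3 → Bool, -Dstar Δv σ (gflux Δv σ f) j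

open Filter Topology

/-- Truncation of a real number to the interval `[-n, n]`. -/
def clamp (n : ℕ) (x : ℝ) : ℝ := max (-(n : ℝ)) (min x n)

lemma abs_clamp_le (n : ℕ) (x : ℝ) : |clamp n x| ≤ n := by
  have hn : (0 : ℝ) ≤ n := n.cast_nonneg
  exact abs_le.2 ⟨le_max_left _ _, max_le (by linarith) (min_le_right _ _)⟩

lemma abs_clamp_sub_le (n : ℕ) (x y : ℝ) : |clamp n x - clamp n y| ≤ |x - y| := by
  unfold clamp
  rw [max_comm _ (min x _), max_comm _ (min y _)]
  refine (abs_max_sub_max_le_abs _ _ _).trans ?_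
  simpa using abs_min_sub_min_le_max x n y n

lemma abs_clamp_le_abs (n : ℕ) (x : ℝ) : |clamp n x| ≤ |x| := by
  have h0 : clamp n 0 = 0 := by simp [clamp]
  simpa [h0] using abs_clamp_sub_le n x 0

lemma tendsto_clamp (x : ℝ) : Tendsto (fun n : ℕ => clamp n x) atTop (𝓝 x) := by
  refine tendsto_const_nhds.congr' ?_
  filter_upwards [eventually_ge_atTop ⌈|x|⌉₊] with n hn
  have h : |x| ≤ n := Nat.ceil_le.1 hn
  obtain ⟨h1, h2⟩ := abs_le.1 h
  rw [clamp, min_eq_left h2, max_eq_right h1]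

/-- Translation of the grid by `a` in the direction `s`. -/
def shift (s : Fin 3) (a : ℤ) : J3 ≃ J3 where
  toFun j := Function.update j s (j s + a)
  invFun j := Function.update j s (j s - a)
  left_inv j := by simp
  right_inv j := by simp

/-- Summation by parts against a bounded sequence `φ`; absolute summability of `g` suffices. -/
lemma hasSum_neg_Dstar_mul (Δv : ℝ) (σ : Fin 3 → Bool) (g : J3 → V3)
    (hg : Summable fun j => ‖g j‖) (φ : J3 → ℝ) (M : ℝ) (hφ : ∀ j, |φ j| ≤ M) :
    HasSum (fun j => -Dstar Δv σ g j * φ j) (-∑' j, ∑ s, g j s * Dd Δv σ φ j s) := by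
  have hgs (s : Fin 3) (θ : J3 → ℝ) (hθ : ∀ j, |θ j| ≤ M) : Summable fun j => g j s * θ j := by
    refine Summable.of_norm_bounded (hg.mul_right M) fun j => ?_
    rw [norm_mul]
    exact mul_le_mul (norm_le_pi_norm (g j) s) (hθ j) (norm_nonneg _) (norm_nonneg _)
  have h1 (s : Fin 3) : Summable fun j => g j s * φ j := hgs s φ hφ
  have h2 (s : Fin 3) : Summable fun j => g j s * φ (shift s (sgn σ s) j) :=
    hgs s _ fun j => hφ _
  have h3 (s : Fin 3) : HasSum (fun j => g ((shift s (sgn σ s)).symm j) s * φ j)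
      (∑' j, g j s * φ (shift s (sgn σ s) j)) := by
    rw [← (shift s (sgn σ s)).hasSum_iff]
    simpa [Function.comp_def] using (h2 s).hasSum
  have hL : HasSum (fun j => -Dstar Δv σ g j * φ j) (∑ s, (sgn σ s : ℝ) / Δv *
      (∑' j, g j s * φ j - ∑' j, g j s * φ (shift s (sgn σ s) j))) := by
    refine (hasSum_sum fun s _ =>
      ((h1 s).hasSum.sub (h3 s)).mul_left ((sgn σ s : ℝ) / Δv)).congr_fun ?_
    intro j
    simp only [Dstar, neg_neg, Finset.sum_mul]
    refine Finset.sum_congr rfl fun s _ => ?_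
    simp only [shift, Equiv.coe_fn_symm_mk]
    ring
  have hR : HasSum (fun j => ∑ s, g j s * Dd Δv σ φ j s) (∑ s, (sgn σ s : ℝ) / Δv *
      (∑' j, g j s * φ (shift s (sgn σ s) j) - ∑' j, g j s * φ j)) := by
    refine (hasSum_sum fun s _ =>
      ((h2 s).hasSum.sub (h1 s).hasSum).mul_left ((sgn σ s : ℝ) / Δv)).congr_fun ?_
    intro j
    refine Finset.sum_congr rfl fun s _ => ?_
    simp only [Dd, shift, Equiv.coe_fn_mk]
    ring
  rw [hR.tsum_eq, ← Finset.sum_neg_distrib]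
  convert hL using 1
  refine Finset.sum_congr rfl fun s _ => ?_
  ring

/-- `S(w)` is positive semidefinite: `‖w‖² ‖p‖² - (w · p)²` is a sum of squares. -/
lemma Smat_mulVec_dot_nonneg (w p : V3) : 0 ≤ ∑ s, (Smat w).mulVec p s * p s := by
  have h : ∑ s, (Smat w).mulVec p s * p s = (w 0 * p 1 - w 1 * p 0) ^ 2 +
      (w 0 * p 2 - w 2 * p 0) ^ 2 + (w 1 * p 2 - w 2 * p 1) ^ 2 := by
    simp [Smat, nsq, Matrix.mulVec, dotProduct, Fin.sum_univ_three, Matrix.vecMulVec_apply,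
      Matrix.one_apply]
    ring
  rw [h]
  positivity

lemma gflux_dot_nonneg (Δv : ℝ) (σ : Fin 3 → Bool) (f : J3 → ℝ) (hpos : ∀ j, 0 < f j) (j : J3) :
    0 ≤ ∑ s, gflux Δv σ f j s * Dd Δv σ (fun i => Real.log (f i)) j s := by
  unfold gflux
  split_ifs
  · simp
  · simp only [Matrix.mulVec_smul, Pi.smul_apply, smul_eq_mul, mul_assoc, ← Finset.mul_sum]
    exact mul_nonneg (by positivity)
      (mul_nonneg (hpos j).le (Smat_mulVec_dot_nonneg _ _))

lemma abs_Dd_clamp_le (Δv : ℝ) (σ : Fin 3 → Bool) (ψ : J3 → ℝ) (n : ℕ) (j : J3) (s : Fin 3) :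
    |Dd Δv σ (fun i => clamp n (ψ i)) j s| ≤ |Dd Δv σ ψ j s| := by
  simp only [Dd, abs_div, abs_mul]
  exact div_le_div_of_nonneg_right
    (mul_le_mul_of_nonneg_left (abs_clamp_sub_le _ _ _) (abs_nonneg _)) (abs_nonneg _)

/-- the discrete Lorentz operator dissipates the discrete entropy:
`Σ_j C^{Δv}(f)(v_j) log f_j ≤ 0`. -/
theorem discrete_lorentz_entropy_dissipation
    (Δv : ℝ) (hΔv : 0 < Δv)
    (f : J3 → ℝ) (hpos : ∀ j, 0 < f j)
    (hsum : ∀ σ : Fin 3 → Bool,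
      Summable fun j : J3 =>
        ‖gflux Δv σ f j‖ * (1 + ‖Dd Δv σ (fun i => Real.log (f i)) j‖)) :
    ∑' j : J3, CLdisc Δv f j * Real.log (f j) ≤ 0 := by
  set ψ : J3 → ℝ := fun i => Real.log (f i) with hψ
  by_cases hS : Summable fun j => CLdisc Δv f j * Real.log (f j)
  swap
  · rw [tsum_eq_zero_of_not_summable hS]
  have hg (σ : Fin 3 → Bool) : Summable fun j => ‖gflux Δv σ f j‖ :=
    (hsum σ).of_nonneg_of_le (fun j => norm_nonneg _) fun j =>
      le_mul_of_one_le_right (norm_nonneg _) (le_add_of_nonneg_right (norm_nonneg _))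
  have hgD (σ : Fin 3 → Bool) : Summable fun j => ‖gflux Δv σ f j‖ * ‖Dd Δv σ ψ j‖ :=
    (hsum σ).of_nonneg_of_le (fun j => by positivity) fun j =>
      mul_le_mul_of_nonneg_left (by linarith) (norm_nonneg _)
  have hparts (n : ℕ) : ∑' j, CLdisc Δv f j * clamp n (ψ j) = (1 / 8) * ∑ σ : Fin 3 → Bool,
      -∑' j, ∑ s, gflux Δv σ f j s * Dd Δv σ (fun i => clamp n (ψ i)) j s := by
    have h := (hasSum_sum fun (σ : Fin 3 → Bool) (_ : σ ∈ Finset.univ) =>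
      hasSum_neg_Dstar_mul Δv σ _ (hg σ) (fun i => clamp n (ψ i)) n
        fun j => abs_clamp_le n (ψ j)).mul_left (1 / 8 : ℝ)
    rw [← h.tsum_eq]
    refine tsum_congr fun j => ?_
    rw [CLdisc, mul_assoc, Finset.sum_mul]
  have hlim₁ : Tendsto (fun n : ℕ => ∑' j, CLdisc Δv f j * clamp n (ψ j)) atTop
      (𝓝 (∑' j, CLdisc Δv f j * Real.log (f j))) := by
    refine tendsto_tsum_of_dominated_convergence hS.norm
      (fun j => (tendsto_clamp (ψ j)).const_mul _) (Eventually.of_forall fun n j => ?_)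
    rw [norm_mul, norm_mul]
    exact mul_le_mul_of_nonneg_left (abs_clamp_le_abs _ _) (norm_nonneg _)
  have hlim₂ (σ : Fin 3 → Bool) : Tendsto (fun n : ℕ => ∑' j, ∑ s, gflux Δv σ f j s *
      Dd Δv σ (fun i => clamp n (ψ i)) j s) atTop
      (𝓝 (∑' j, ∑ s, gflux Δv σ f j s * Dd Δv σ ψ j s)) := by
    refine tendsto_tsum_of_dominated_convergence ((hgD σ).mul_left 3) (fun j => ?_)
      (Eventually.of_forall fun n j => ?_)
    · refine tendsto_finsetSum _ fun s _ => Tendsto.const_mul _ ?_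
      exact (((tendsto_clamp _).sub (tendsto_clamp _)).const_mul _).div_const _
    · calc _ ≤ ∑ s : Fin 3, ‖gflux Δv σ f j‖ * ‖Dd Δv σ ψ j‖ := by
            refine norm_sum_le_of_le _ fun s _ => ?_
            rw [norm_mul]
            exact mul_le_mul (norm_le_pi_norm _ s)
              ((abs_Dd_clamp_le Δv σ ψ n j s).trans (norm_le_pi_norm (Dd Δv σ ψ j) s))
              (norm_nonneg _) (norm_nonneg _)
        _ = _ := by simp
  have hlim₃ := (tendsto_finsetSum Finset.univ fun (σ : Fin 3 → Bool) _ =>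
    (hlim₂ σ).neg).const_mul (1 / 8 : ℝ)
  simp only [← hparts] at hlim₃
  rw [tendsto_nhds_unique hlim₁ hlim₃]
  refine mul_nonpos_of_nonneg_of_nonpos (by norm_num) (Finset.sum_nonpos fun σ _ => ?_)
  exact neg_nonpos.2 (tsum_nonneg fun j => gflux_dot_nonneg Δv σ f hpos j)
end
end

section
/- Fix Δv > 0 and grid points v_j = jΔv for j ∈ ℤ³, and fix a direction k ∈ {1,2,3}. Let σ_k : ℤ³ → ℤ³ be the map negating the k-th component of the index. Let f : ℤ³ → ℝ with f_j > 0 for all j, and assume f decays fast enough (e.g. Gaussian-type decay with |log f_j| of polynomial growth) that Σ_j ‖g^ε_j‖ (1 + ‖v_j‖²) < ∞ for every ε ∈ {−1,+1}³, where g^ε is the discrete Lorentz flux. If f is symmetric with respect to 0 in the direction k, i.e. f_{σ_k(j)} = f_j for all j ∈ ℤ³, then the discrete Lorentz operator produces no momentum in direction k: Σ_{j∈ℤ³} C^{Δv}(f)(v_j) (v_j)_k Δv³ = 0; consequently the explicit scheme f^{n+1}_j = f^n_j + Δt C^{Δv}(f^n)(v_j) preserves this symmetry of the distribution function. -/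
/-!
The reflection `R` negating the `k`-th coordinate acts on grid indices (`sigmak`) and on the
sign patterns `ε` of the uncentered differences (`flipSign`). Every ingredient of the scheme is
equivariant under the simultaneous action: `‖R v‖ = ‖v‖`, `S(R w) R = R S(w)`, and
`D^{Rε} ψ (R j) = R (D^ε ψ) (j)` for `ψ` even, so `g^{Rε}_{Rj} = R g^ε_j` when `f` is even
(`gflux_sigmak`), and the discrete divergence turns this into a scalar identity
(`Dstar_sigmak`). Since `ε ↦ Rε` permutes the eight patterns, the averaged operator
`C^{Δv}(f)` is even (`CLdisc_sigmak`). This is the symmetry of the explicit scheme, and it makes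
`j ↦ C^{Δv}(f)(v_j) (v_j)_k` odd under the bijection `sigmak k` of ℤ³, so its sum equals its own
negative. That last step is valid for `∑'` whether or not the family is summable.
-/

open scoped BigOperators Classical

noncomputable section

/-- The index reflection negating the k-th component. -/
def sigmak (k : Fin 3) (j : J3) : J3 := Function.update j k (-(j k))

/-- The coordinate signs of the reflection `R` of ℝ³ negating the `k`-th component:
`(R v)_s = reflSign k s * v_s`. -/
def reflSign (k s : Fin 3) : ℝ := if s = k then -1 else 1

/-- The sign pattern `ε' = R ε`, with the `k`-th sign reversed. -/
def flipSign (k : Fin 3) (σ : Fin 3 → Bool) : Fin 3 → Bool :=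
  Function.update σ k (!σ k)

lemma sigmak_invol (k : Fin 3) : Function.Involutive (sigmak k) := by
  intro j
  simp [sigmak]

lemma flipSign_invol (k : Fin 3) : Function.Involutive (flipSign k) := by
  intro σ
  simp [flipSign]

lemma reflSign_mul_self (k s : Fin 3) : reflSign k s * reflSign k s = 1 := by
  unfold reflSign; split_ifs <;> norm_num

lemma sgn_flipSign (k : Fin 3) (σ : Fin 3 → Bool) (s : Fin 3) :
    sgn (flipSign k σ) s = if s = k then -sgn σ s else sgn σ s := by
  by_cases h : s = k
  · subst h
    cases hs : σ s <;> simp [sgn, flipSign, hs]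
  · simp [sgn, flipSign, h]

lemma sgn_flipSign_cast (k : Fin 3) (σ : Fin 3 → Bool) (s : Fin 3) :
    (sgn (flipSign k σ) s : ℝ) = reflSign k s * sgn σ s := by
  rw [sgn_flipSign]; unfold reflSign; split_ifs <;> simp

lemma sigmak_apply (k : Fin 3) (j : J3) (s : Fin 3) :
    sigmak k j s = if s = k then -j s else j s := by
  by_cases h : s = k
  · subst h; simp [sigmak]
  · simp [sigmak, h]

lemma sigmak_shift_add (k : Fin 3) (σ : Fin 3 → Bool) (j : J3) (s : Fin 3) :
    Function.update (sigmak k j) s (sigmak k j s + sgn (flipSign k σ) s)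
      = sigmak k (Function.update j s (j s + sgn σ s)) := by
  funext t
  rw [sigmak_apply, sigmak_apply, sgn_flipSign]
  by_cases hts : t = s
  · subst hts
    simp only [Function.update_self]
    split_ifs <;> ring
  · simp only [Function.update_of_ne hts, sigmak_apply]

lemma sigmak_shift_sub (k : Fin 3) (σ : Fin 3 → Bool) (j : J3) (s : Fin 3) :
    Function.update (sigmak k j) s (sigmak k j s - sgn (flipSign k σ) s)
      = sigmak k (Function.update j s (j s - sgn σ s)) := by
  funext t
  rw [sigmak_apply, sigmak_apply, sgn_flipSign]
  by_cases hts : t = s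
  · subst hts
    simp only [Function.update_self]
    split_ifs <;> ring
  · simp only [Function.update_of_ne hts, sigmak_apply]

lemma vj_sigmak (Δv : ℝ) (k : Fin 3) (j : J3) (s : Fin 3) :
    vj Δv (sigmak k j) s = reflSign k s * vj Δv j s := by
  unfold vj reflSign
  rw [sigmak_apply]
  split_ifs <;> simp

lemma vtilde_sigmak (Δv : ℝ) (k : Fin 3) (σ : Fin 3 → Bool) (j : J3) :
    vtilde Δv (flipSign k σ) (sigmak k j) = fun s => reflSign k s * vtilde Δv σ j s := by
  funext s
  simp only [vtilde, vj, sigmak_apply, sgn_flipSign, reflSign]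
  split_ifs <;> push_cast <;> ring

lemma nsq_refl (k : Fin 3) (w : V3) : nsq (fun s => reflSign k s * w s) = nsq w := by
  unfold nsq
  refine Finset.sum_congr rfl fun s _ => ?_
  rw [mul_pow, sq (reflSign k s), reflSign_mul_self, one_mul]

lemma Smat_mulVec_apply (w x : V3) (s : Fin 3) :
    (Smat w).mulVec x s = nsq w * x s - w s * ∑ t, w t * x t := by
  simp [Smat, Matrix.sub_mulVec, Matrix.smul_mulVec, Matrix.vecMulVec_mulVec, dotProduct,
    mul_comm]

/-- Conjugation of `S` by the reflection: `S(R w) (R x) = R (S(w) x)`. -/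
lemma Smat_refl (k : Fin 3) (w x : V3) (s : Fin 3) :
    (Smat fun t => reflSign k t * w t).mulVec (fun t => reflSign k t * x t) s
      = reflSign k s * (Smat w).mulVec x s := by
  rw [Smat_mulVec_apply, Smat_mulVec_apply, nsq_refl]
  have h : ∑ t, reflSign k t * w t * (reflSign k t * x t) = ∑ t, w t * x t := by
    refine Finset.sum_congr rfl fun t _ => ?_
    linear_combination w t * x t * reflSign_mul_self k t
  rw [h]; ring

lemma Dd_sigmak (Δv : ℝ) (k : Fin 3) (σ : Fin 3 → Bool) (ψ : J3 → ℝ)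
    (hψ : ∀ j, ψ (sigmak k j) = ψ j) (j : J3) :
    Dd Δv (flipSign k σ) ψ (sigmak k j) = fun s => reflSign k s * Dd Δv σ ψ j s := by
  funext s
  simp only [Dd]
  rw [sigmak_shift_add, hψ, hψ, sgn_flipSign_cast]
  ring

/-- Equivariance of the flux: reflecting both the grid point and the sign pattern
reflects the flux vector, `g^{Rε}_{Rj} = R g^ε_j`. -/
lemma gflux_sigmak (Δv : ℝ) (k : Fin 3) (σ : Fin 3 → Bool) (f : J3 → ℝ)
    (hf : ∀ j, f (sigmak k j) = f j) (j : J3) (s : Fin 3) :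
    gflux Δv (flipSign k σ) f (sigmak k j) s = reflSign k s * gflux Δv σ f j s := by
  have hvj : vj Δv (sigmak k j) = fun s => reflSign k s * vj Δv j s :=
    funext (vj_sigmak Δv k j)
  have hr : ∀ s, reflSign k s ≠ 0 := fun s h => by
    have := reflSign_mul_self k s
    simp [h] at this
  have hz : vj Δv (sigmak k j) = 0 ↔ vj Δv j = 0 := by
    simp [hvj, funext_iff, hr]
  unfold gflux
  by_cases h : vj Δv j = 0
  · rw [if_pos h, if_pos (hz.2 h)]; simp
  · rw [if_neg h, if_neg (mt hz.1 h), hvj, nsq_refl, vtilde_sigmak,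
      Dd_sigmak Δv k σ _ (fun i => by rw [hf]), hf]
    have hx : (f j • fun s => reflSign k s * Dd Δv σ (fun i => Real.log (f i)) j s)
        = fun s => reflSign k s * (f j • Dd Δv σ (fun i => Real.log (f i)) j) s := by
      funext t; simp only [Pi.smul_apply, smul_eq_mul]; ring
    rw [hx, Pi.smul_apply, Pi.smul_apply, Smat_refl]
    simp only [smul_eq_mul]; ring

/-- The discrete divergence of an equivariant pair of fluxes is invariant. -/
lemma Dstar_sigmak (Δv : ℝ) (k : Fin 3) (σ : Fin 3 → Bool) (g g' : J3 → V3)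
    (hg : ∀ j s, g' (sigmak k j) s = reflSign k s * g j s) (j : J3) :
    Dstar Δv (flipSign k σ) g' (sigmak k j) = Dstar Δv σ g j := by
  unfold Dstar
  congr 1
  refine Finset.sum_congr rfl fun s _ => ?_
  rw [sigmak_shift_sub, hg, hg, sgn_flipSign_cast]
  linear_combination (sgn σ s : ℝ) *
    (g j s - g (Function.update j s (j s - sgn σ s)) s) / Δv * reflSign_mul_self k s

/-- A single `ε`-term is not invariant under the reflection; it is exchanged with the term
of the reflected sign pattern, so only the average over all eight patterns is even. -/
lemma CLdisc_sigmak (Δv : ℝ) (k : Fin 3) (f : J3 → ℝ)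
    (hf : ∀ j, f (sigmak k j) = f j) (j : J3) :
    CLdisc Δv f (sigmak k j) = CLdisc Δv f j := by
  unfold CLdisc
  congr 1
  rw [← Equiv.sum_comp (flipSign_invol k).toPerm]
  refine Finset.sum_congr rfl fun σ _ => ?_
  rw [Function.Involutive.coe_toPerm,
    Dstar_sigmak Δv k σ _ _ (gflux_sigmak Δv k σ f hf)]

/-- if `f` is symmetric with respect to 0 in the direction `k`, then the
discrete Lorentz operator produces no momentum in direction `k`, and the explicit
scheme `f + Δt C^{Δv}(f)` preserves this symmetry. -/
theorem discrete_lorentz_preserves_symmetry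
    (Δv : ℝ) (hΔv : 0 < Δv) (k : Fin 3)
    (f : J3 → ℝ) (hpos : ∀ j, 0 < f j)
    (hsum : ∀ σ : Fin 3 → Bool,
      Summable fun j : J3 => ‖gflux Δv σ f j‖ * (1 + nsq (vj Δv j)))
    (hsym : ∀ j : J3, f (sigmak k j) = f j) :
    (∑' j : J3, CLdisc Δv f j * vj Δv j k) * Δv ^ 3 = 0 ∧
    ∀ (Δt : ℝ) (j : J3),
      f (sigmak k j) + Δt * CLdisc Δv f (sigmak k j) = f j + Δt * CLdisc Δv f j := by
  have hC := CLdisc_sigmak Δv k f hsym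
  refine ⟨?_, fun Δt j => by rw [hsym, hC]⟩
  have hodd : ∑' j : J3, CLdisc Δv f j * vj Δv j k
      = -∑' j : J3, CLdisc Δv f j * vj Δv j k := by
    conv_lhs => rw [← Equiv.tsum_eq (sigmak_invol k).toPerm]
    rw [← tsum_neg]
    refine tsum_congr fun j => ?_
    rw [Function.Involutive.coe_toPerm, hC, vj_sigmak]
    simp [reflSign]
  rw [self_eq_neg.mp hodd, zero_mul]
end
end

section
/- Let N ≥ 1 be an integer, M > 0, v > 0, Δt, Δx > 0, and let f : ℤ/Nℤ → ℝ satisfy 0 ≤ f_i ≤ M for all i. For each i define the slope limiter ε_i by: ε_i = 0 if (f_{i+1} − f_i)(f_i − f_{i−1}) < 0; otherwise ε_i = min(1, 2(M − f_i)/(f_i − f_{i+1})) if f_{i+1} − f_i < 0; ε_i = min(1, 2 f_i/(f_{i+1} − f_i)) if f_{i+1} − f_i > 0; and ε_i = 1 if f_{i+1} = f_i. Define the interface values G_i = f_i + (ε_i/2)(f_{i+1} − f_i) and the finite-volume update f′_i = f_i − (vΔt/Δx)(G_i − G_{i−1}). If the CFL condition vΔt/Δx ≤ 1/2 holds, then the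 scheme preserves total mass, Σ_{i∈ℤ/Nℤ} f′_i = Σ_{i∈ℤ/Nℤ} f_i, and satisfies the maximum principle 0 ≤ f′_i ≤ M for every i; in particular it gives a nonnegative approximation. -/
/-!
With `λ = v Δt / Δx`, the sum of the fluxes telescopes on the periodic grid, which gives the
conservation of mass.

For the maximum principle, the limiter gives `G i ≤ 2 f i` and `M - G i ≤ 2 (M - f i)`, while
`G i ∈ [0, M]` because `G i` is a convex combination of `f i` and `f (i + 1)`. Hence
`G i - G (i - 1) ≤ 2 f i` and `G (i - 1) - G i ≤ 2 (M - f i)`, and `0 ≤ λ ≤ 1 / 2` yields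
`f' i ≥ (1 - 2 λ) f i ≥ 0` and `M - f' i ≥ (1 - 2 λ) (M - f i) ≥ 0`.
-/


open scoped BigOperators

/-- Bounds on the limited interface value `a + (e / 2) (b - a)`, where `a`, `b`, `c` are the values
in a cell, its right neighbour and its left neighbour, and `e` is the slope limiter. The value of
`c` is irrelevant: at an extremum `e = 0`, and all four bounds are trivial. -/
theorem limited_interface_bounds {M a b c e : ℝ} (ha : a ∈ Set.Icc (0 : ℝ) M)
    (hb : b ∈ Set.Icc (0 : ℝ) M)
    (he : e = if (b - a) * (a - c) < 0 then 0
      else if b - a < 0 then min 1 (2 * (M - a) / (a - b))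
      else if 0 < b - a then min 1 (2 * a / (b - a))
      else 1) :
    0 ≤ a + e / 2 * (b - a) ∧ a + e / 2 * (b - a) ≤ M ∧
      a + e / 2 * (b - a) ≤ 2 * a ∧ M - (a + e / 2 * (b - a)) ≤ 2 * (M - a) := by
  obtain ⟨ha0, haM⟩ := ha
  obtain ⟨hb0, hbM⟩ := hb
  split_ifs at he with h1 h2 h3
  · subst he
    refine ⟨?_, ?_, ?_, ?_⟩ <;> linarith
  · have hpos : 0 < a - b := by linarith
    have he1 : e ≤ 1 := he ▸ min_le_left _ _
    have he0 : 0 ≤ e := he ▸ le_min zero_le_one (div_nonneg (by linarith) hpos.le)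
    have he2 : e * (a - b) ≤ 2 * (M - a) := (le_div_iff₀ hpos).1 (he ▸ min_le_right _ _)
    have h4 : 0 ≤ e * (a - b) := mul_nonneg he0 hpos.le
    have h5 : e * (a - b) ≤ a - b := mul_le_of_le_one_left hpos.le he1
    refine ⟨?_, ?_, ?_, ?_⟩ <;> linarith
  · have he1 : e ≤ 1 := he ▸ min_le_left _ _
    have he0 : 0 ≤ e := he ▸ le_min zero_le_one (div_nonneg (by linarith) h3.le)
    have he2 : e * (b - a) ≤ 2 * a := (le_div_iff₀ h3).1 (he ▸ min_le_right _ _)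
    have h4 : 0 ≤ e * (b - a) := mul_nonneg he0 h3.le
    have h5 : e * (b - a) ≤ b - a := mul_le_of_le_one_left h3.le he1
    refine ⟨?_, ?_, ?_, ?_⟩ <;> linarith
  · obtain rfl : b = a := by linarith
    refine ⟨?_, ?_, ?_, ?_⟩ <;> linarith

/-- one explicit Euler step of the slope-limited second order finite volume
scheme for 1D advection (velocity v > 0) on a periodic grid preserves total mass and
satisfies the maximum principle `0 ≤ f′ ≤ M` under the CFL condition `vΔt/Δx ≤ 1/2`. -/
theorem finite_volume_scheme_mass_and_maximum_principle
    (N : ℕ) [NeZero N] (hN : 1 ≤ N)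
    (M v Δt Δx : ℝ) (hM : 0 < M) (hv : 0 < v) (hΔt : 0 < Δt) (hΔx : 0 < Δx)
    (f : ZMod N → ℝ) (hf : ∀ i : ZMod N, f i ∈ Set.Icc (0:ℝ) M)
    (ε : ZMod N → ℝ)
    (hε : ∀ i : ZMod N, ε i =
      if (f (i + 1) - f i) * (f i - f (i - 1)) < 0 then 0
      else if f (i + 1) - f i < 0 then min 1 (2 * (M - f i) / (f i - f (i + 1)))
      else if 0 < f (i + 1) - f i then min 1 (2 * f i / (f (i + 1) - f i))
      else 1)
    (G : ZMod N → ℝ) (hG : ∀ i : ZMod N, G i = f i + (ε i / 2) * (f (i + 1) - f i))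
    (f' : ZMod N → ℝ) (hf' : ∀ i : ZMod N, f' i = f i - (v * Δt / Δx) * (G i - G (i - 1)))
    (hCFL : v * Δt / Δx ≤ 1 / 2) :
    (∑ i : ZMod N, f' i = ∑ i : ZMod N, f i) ∧
    ∀ i : ZMod N, 0 ≤ f' i ∧ f' i ≤ M := by
  constructor
  · have hshift : ∑ i : ZMod N, G (i - 1) = ∑ i : ZMod N, G i :=
      (Equiv.subRight (1 : ZMod N)).sum_comp G
    simp only [hf', Finset.sum_sub_distrib, ← Finset.mul_sum, hshift, sub_self, mul_zero, sub_zero]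
  · intro i
    have hb : ∀ j, 0 ≤ G j ∧ G j ≤ M ∧ G j ≤ 2 * f j ∧ M - G j ≤ 2 * (M - f j) := fun j => by
      rw [hG j]
      exact limited_interface_bounds (hf j) (hf (j + 1)) (hε j)
    obtain ⟨-, -, h1, h2⟩ := hb i
    obtain ⟨h3, h4, -, -⟩ := hb (i - 1)
    obtain ⟨h5, h6⟩ := hf i
    have hlam : 0 ≤ v * Δt / Δx := by positivity
    rw [hf' i]
    generalize v * Δt / Δx = l at hCFL hlam ⊢
    have h7 : l * (G i - G (i - 1)) ≤ l * (2 * f i) :=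
      mul_le_mul_of_nonneg_left (by linarith) hlam
    have h8 : l * (G (i - 1) - G i) ≤ l * (2 * (M - f i)) :=
      mul_le_mul_of_nonneg_left (by linarith) hlam
    have h9 : l * f i ≤ 1 / 2 * f i := mul_le_mul_of_nonneg_right hCFL h5
    have h10 : l * (M - f i) ≤ 1 / 2 * (M - f i) :=
      mul_le_mul_of_nonneg_right hCFL (by linarith)
    constructor <;> linarith
end
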